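/- arXiv:1906.00729 — 7 statements merged into one kernel-verified Lean document; each statement's English description precedes it below -/
import Mathlib

section
/- Let R ∈ ℝ^{m₂×m₂} be symmetric positive definite, Q ∈ ℝ^{d×d} symmetric, and ζ > 0. Then the set Ω := {L ∈ ℝ^{m₂×d} : Q − LᵀRL − ζ·I is positive semidefinite} is a convex and compact subset of ℝ^{m₂×d}. -/
open Matrix

/-!
Testing against vectors, `L ∈ Ω` means that `(Lx)ᵀR(Lx) ≤ xᵀQx - ζ xᵀx` for every `x`
(`mem_omega_iff`). For fixed `x` the left side is a convex continuous function of `L`, so `Ω` is an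
intersection of closed convex sets.

For boundedness, expand `(y - w)ᵀR(y - w) ≥ 0` at `w = R⁻¹eᵢ`: this gives
`2yᵢ ≤ yᵀRy + (R⁻¹)ᵢᵢ` (`two_mul_apply_le`). With `y = ±Leⱼ` it bounds every entry of `L ∈ Ω` by
a constant depending only on `i` and `j`, so `Ω` is a closed subset of a product of compact
intervals.
-/

lemma mem_omega_iff {m d : ℕ} {R : Matrix (Fin m) (Fin m) ℝ} {Q : Matrix (Fin d) (Fin d) ℝ}
    (hR : R.PosDef) (hQ : Q.IsHermitian) (ζ : ℝ) (L : Matrix (Fin m) (Fin d) ℝ) :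
    (Q - Lᵀ * R * L - ζ • (1 : Matrix (Fin d) (Fin d) ℝ)).PosSemidef ↔
      ∀ x : Fin d → ℝ,
        (L *ᵥ x) ⬝ᵥ (R *ᵥ (L *ᵥ x)) ≤ x ⬝ᵥ (Q *ᵥ x) - ζ * (x ⬝ᵥ x) := by
  have hherm : (Q - Lᵀ * R * L - ζ • (1 : Matrix (Fin d) (Fin d) ℝ)).IsHermitian := by
    have h1 : (Lᵀ * R * L).IsHermitian := by
      simpa using isHermitian_conjTranspose_mul_mul L hR.1
    have h2 : (ζ • (1 : Matrix (Fin d) (Fin d) ℝ)).IsHermitian := by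
      simp [IsHermitian]
    exact (hQ.sub h1).sub h2
  have key : ∀ x : Fin d → ℝ,
      x ⬝ᵥ ((Q - Lᵀ * R * L - ζ • (1 : Matrix (Fin d) (Fin d) ℝ)) *ᵥ x) =
        x ⬝ᵥ (Q *ᵥ x) - ζ * (x ⬝ᵥ x) - (L *ᵥ x) ⬝ᵥ (R *ᵥ (L *ᵥ x)) := by
    intro x
    have h : x ⬝ᵥ ((Lᵀ * R * L) *ᵥ x) = (L *ᵥ x) ⬝ᵥ (R *ᵥ (L *ᵥ x)) := by
      rw [← mulVec_mulVec, ← mulVec_mulVec, dotProduct_mulVec, vecMul_transpose]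
    rw [sub_mulVec, sub_mulVec, dotProduct_sub, dotProduct_sub, h, smul_mulVec, one_mulVec,
      dotProduct_smul, smul_eq_mul]
    ring
  rw [posSemidef_iff_dotProduct_mulVec]
  simp only [star_trivial, key, sub_nonneg, hherm, true_and]

lemma two_mul_apply_le {m : ℕ} {R : Matrix (Fin m) (Fin m) ℝ} (hR : R.PosDef)
    (y : Fin m → ℝ) (i : Fin m) :
    2 * y i ≤ y ⬝ᵥ (R *ᵥ y) + R⁻¹ i i := by
  have hsymm : Rᵀ = R := by simpa [IsHermitian] using hR.1
  set w : Fin m → ℝ := R⁻¹ *ᵥ Pi.single i 1 with hw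
  have hRw : R *ᵥ w = Pi.single i 1 := by
    rw [hw, mulVec_mulVec, mul_nonsing_inv R ((isUnit_iff_isUnit_det R).1 hR.isUnit), one_mulVec]
  have h1 : y ⬝ᵥ (R *ᵥ w) = y i := by simp [hRw]
  have h2 : w ⬝ᵥ (R *ᵥ y) = y i := by
    rw [dotProduct_mulVec, ← mulVec_transpose, hsymm, hRw]; simp
  have h3 : w ⬝ᵥ (R *ᵥ w) = R⁻¹ i i := by rw [hRw]; simp [hw]
  have h := hR.posSemidef.dotProduct_mulVec_nonneg (y - w)
  rw [star_trivial, mulVec_sub, sub_dotProduct, dotProduct_sub, dotProduct_sub, h1, h2, h3] at h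
  linarith

/-- Convexity of `y ↦ yᵀRy`: the convexity defect is `ab (u - v)ᵀR(u - v)`. -/
lemma quadForm_combo_le {m : ℕ} {R : Matrix (Fin m) (Fin m) ℝ} (hR : R.PosDef)
    (u v : Fin m → ℝ) {a b : ℝ} (ha : 0 ≤ a) (hb : 0 ≤ b) (hab : a + b = 1) :
    (a • u + b • v) ⬝ᵥ (R *ᵥ (a • u + b • v)) ≤
      a * (u ⬝ᵥ (R *ᵥ u)) + b * (v ⬝ᵥ (R *ᵥ v)) := by
  have h := mul_nonneg (mul_nonneg ha hb) (hR.posSemidef.dotProduct_mulVec_nonneg (u - v))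
  obtain rfl : b = 1 - a := by linarith
  simp only [star_trivial, mulVec_sub, mulVec_add, mulVec_smul, sub_dotProduct, dotProduct_sub,
    add_dotProduct, dotProduct_add, smul_dotProduct, dotProduct_smul, smul_eq_mul] at h ⊢
  linarith

/-- The set `Ω = {L : Q - LᵀRL - ζ·I ⪰ 0}` is convex and compact. -/
theorem omega_convex_compact (m₂ d : ℕ) (R : Matrix (Fin m₂) (Fin m₂) ℝ)
    (Q : Matrix (Fin d) (Fin d) ℝ) (hR : R.PosDef) (hQ : Q.IsHermitian)
    (ζ : ℝ) (hζ : 0 < ζ) :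
    Convex ℝ {L : Matrix (Fin m₂) (Fin d) ℝ |
        (Q - Lᵀ * R * L - ζ • (1 : Matrix (Fin d) (Fin d) ℝ)).PosSemidef} ∧
      IsCompact {L : Matrix (Fin m₂) (Fin d) ℝ |
        (Q - Lᵀ * R * L - ζ • (1 : Matrix (Fin d) (Fin d) ℝ)).PosSemidef} := by
  simp only [mem_omega_iff hR hQ]
  constructor
  · intro L hL M hM a b ha hb hab x
    have h := quadForm_combo_le hR (L *ᵥ x) (M *ᵥ x) ha hb hab
    have h1 := mul_le_mul_of_nonneg_left (hL x) ha
    have h2 := mul_le_mul_of_nonneg_left (hM x) hb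
    rw [add_mulVec, smul_mulVec, smul_mulVec]
    calc _ ≤ _ := h
      _ ≤ _ := add_le_add h1 h2
      _ = _ := by rw [← add_mul, hab, one_mul]
  · let C : Fin m₂ → Fin d → ℝ := fun i j => (Q j j - ζ + R⁻¹ i i) / 2
    have hbox : IsCompact (Set.univ.pi fun i => Set.univ.pi fun j => Set.Icc (-C i j) (C i j) :
        Set (Matrix (Fin m₂) (Fin d) ℝ)) :=
      isCompact_univ_pi fun i => isCompact_univ_pi fun j => isCompact_Icc
    refine hbox.of_isClosed_subset ?_ ?_
    · simp only [Set.ofPred_forall]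
      refine isClosed_iInter fun x => isClosed_le ?_ continuous_const
      have hc : Continuous fun L : Matrix (Fin m₂) (Fin d) ℝ => L *ᵥ x :=
        continuous_id.matrix_mulVec continuous_const
      exact hc.dotProduct (continuous_const.matrix_mulVec hc)
    · intro L hL i _ j _
      have hj := hL (Pi.single j 1)
      have hp := two_mul_apply_le hR (L *ᵥ Pi.single j 1) i
      have hn := two_mul_apply_le hR (-(L *ᵥ Pi.single j 1)) i
      rw [mulVec_neg, neg_dotProduct_neg] at hn
      have hLij : (L *ᵥ Pi.single j 1) i = L i j := congrFun (mulVec_single_one L j) i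
      have hQjj : (Pi.single j 1 : Fin d → ℝ) ⬝ᵥ (Q *ᵥ Pi.single j 1) = Q j j := by simp
      have hjj : (Pi.single j 1 : Fin d → ℝ) ⬝ᵥ Pi.single j 1 = 1 := by simp
      rw [hQjj, hjj] at hj
      rw [Pi.neg_apply, hLij] at hn
      rw [hLij] at hp
      simp only [C, Set.mem_Icc]
      constructor <;> linarith
end

section
/- There exist real 3×3 matrices A, K₁, K₂ such that ρ(A − K₁) < 1 and ρ(A − K₂) < 1 but ρ(A − ½(K₁ + K₂)) ≥ 1; that is, with B equal to the 3×3 identity matrix, the set of stabilizing feedback gains {K ∈ ℝ^{3×3} : ρ(A − BK) < 1} is not convex. -/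
/-!
Take `A = 0` and the square-zero matrices `K₁ = 2 E₀₁`, `K₂ = 2 E₁₀`. A nilpotent matrix has no
spectrum except `0`, so both `A - Kᵢ` have spectral radius `0`, whereas
`A - (K₁ + K₂) / 2 = -(E₀₁ + E₁₀)` has the eigenvalue `1`, with eigenvector `(1, -1, 0)`.
Since the midpoint of the two stabilizing gains is not stabilizing, the set is not convex.
-/

open Matrix

noncomputable section

/-- Spectral radius of a real square matrix: the spectral radius of its complexification. -/
def specRad {n : ℕ} (M : Matrix (Fin n) (Fin n) ℝ) : ENNReal :=
  spectralRadius ℂ (M.map (algebraMap ℝ ℂ))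

lemma specRad_lt_one_of_sq_eq_zero {n : ℕ} (M : Matrix (Fin n) (Fin n) ℝ) (h : M * M = 0) :
    specRad M < 1 := by
  refine lt_of_le_of_lt (b := 0) ?_ zero_lt_one
  refine iSup₂_le fun μ hμ => ?_
  have hz : (M.map (algebraMap ℝ ℂ)) ^ 2 = 0 := by
    rw [pow_two, ← Matrix.map_mul, h]
    simp
  have hp := spectrum.pow_mem_pow (M.map (algebraMap ℝ ℂ)) 2 hμ
  rw [hz] at hp
  have h0 : μ = 0 := by
    by_contra hne
    -- A nonzero scalar matrix is invertible, so `μ ^ 2` is not in the spectrum of `0`.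
    refine spectrum.mem_iff.1 hp ?_
    rw [sub_zero]
    exact (IsUnit.mk0 _ (pow_ne_zero 2 hne)).map (algebraMap ℂ _)
  simp [h0]

lemma one_le_specRad_of_det_eq_zero {n : ℕ} (M : Matrix (Fin n) (Fin n) ℝ)
    (h : (1 - M).det = 0) : 1 ≤ specRad M := by
  have hmem : (1 : ℂ) ∈ spectrum ℂ (M.map (algebraMap ℝ ℂ)) := by
    rw [spectrum.mem_iff, map_one, Matrix.isUnit_iff_isUnit_det]
    have e : (1 : Matrix (Fin n) (Fin n) ℂ) - M.map (algebraMap ℝ ℂ)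
        = (algebraMap ℝ ℂ).mapMatrix (1 - M) := by
      rw [map_sub, map_one]; rfl
    rw [e, ← RingHom.map_det, h]
    simp
  have := le_iSup₂ (f := fun (k : ℂ) (_ : k ∈ spectrum ℂ (M.map (algebraMap ℝ ℂ))) =>
    (‖k‖₊ : ENNReal)) 1 hmem
  simpa [specRad, spectralRadius] using this

/-- There are `3 × 3` real matrices `A, K₁, K₂` with `ρ(A - K₁) < 1` and `ρ(A - K₂) < 1` but
`ρ(A - (K₁ + K₂)/2) ≥ 1`; in particular, with `B = 1` the set of stabilizing gains
`{K : ρ(A - B*K) < 1}` is not convex. -/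
theorem stabilizing_gains_not_convex :
    ∃ A K₁ K₂ : Matrix (Fin 3) (Fin 3) ℝ,
      specRad (A - K₁) < 1 ∧ specRad (A - K₂) < 1 ∧
      1 ≤ specRad (A - ((1 : ℝ) / 2) • (K₁ + K₂)) ∧
      ¬ Convex ℝ {K : Matrix (Fin 3) (Fin 3) ℝ |
          specRad (A - (1 : Matrix (Fin 3) (Fin 3) ℝ) * K) < 1} := by
  have h1 : specRad (0 - !![0, 2, 0; 0, 0, 0; 0, 0, (0 : ℝ)]) < 1 := by
    apply specRad_lt_one_of_sq_eq_zero
    ext i j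
    fin_cases i <;> fin_cases j <;> simp [Matrix.mul_apply, Fin.sum_univ_three]
  have h2 : specRad (0 - !![0, 0, 0; 2, 0, 0; 0, 0, (0 : ℝ)]) < 1 := by
    apply specRad_lt_one_of_sq_eq_zero
    ext i j
    fin_cases i <;> fin_cases j <;> simp [Matrix.mul_apply, Fin.sum_univ_three]
  have h3 : 1 ≤ specRad (0 - ((1 : ℝ) / 2) •
      (!![0, 2, 0; 0, 0, 0; 0, 0, (0 : ℝ)] + !![0, 0, 0; 2, 0, 0; 0, 0, (0 : ℝ)])) := by
    apply one_le_specRad_of_det_eq_zero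
    simp [Matrix.det_fin_three]
  refine ⟨0, _, _, h1, h2, h3, fun hc => ?_⟩
  have hm := hc (by simpa only [Set.mem_ofPred_eq, one_mul] using h1)
    (by simpa only [Set.mem_ofPred_eq, one_mul] using h2)
    (by norm_num : (0 : ℝ) ≤ 1 / 2) (by norm_num : (0 : ℝ) ≤ 1 / 2) (by norm_num)
  rw [Set.mem_ofPred_eq, one_mul, ← smul_add] at hm
  exact absurd h3 (not_le.2 hm)
end
end

section
/- The cost function C is differentiable on the open set S := {(K,L) : ρ(A−BK−CL) < 1}, and for every stabilizing (K,L): (i) the derivative of K ↦ C(K,L) at K in any direction H ∈ ℝ^{m₁×d} equals 2·tr(Σ_{K,L} E_{K,L}ᵀ H); (ii) the derivative of L ↦ C(K,L) at L in any direction H′ ∈ ℝ^{m₂×d} equals 2·tr(Σ_{K,L} F_{K,L}ᵀ H′). Equivalently, ∇_K C(K,L) = 2 E_{K,L} Σ_{K,L} and ∇_L C(K,L) = 2 F_{K,L} Σ_{K,L}. -/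
/-!
The value matrix solves the Lyapunov equation `P = W + Mᵀ P M`, with `M = A - BK - CL` and
`W = Q + KᵀRᵘK - LᵀRᵛL`. Two facts carry the theorem.

*Differentiability.* By Gelfand's formula, stability of `M` is an open condition and makes the
powers of `M` summable (`LQ.eventually_summable_pow`). Hence the series defining `P` converges near
a stabilizing pair and satisfies the Lyapunov equation there. At the pair itself the operator
`X ↦ X - Mᵀ X M` is injective, hence invertible in finite dimension, so that `P` is the inverse
of an operator depending differentiably on `(K, L)`, applied to `W`
(`differentiableAt_of_eq_sandwich`).

*Gradient.* Along a line with direction `(H, H')`, differentiating the Lyapunov equation gives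
`P' = (HᵀE + EᵀH + H'ᵀF + FᵀH') + Mᵀ P' M` (`LQ.hasDerivAt_P_line`). The matrix `Σ_{K,L}` solves the
adjoint equation `Σ = Σ₀ + M Σ Mᵀ`, so `tr(Σ₀ P')` is the trace of `Σ` against the bracket
(`LQ.trace_mul_eq_of_lyapunov`), and the symmetry of `Σ` merges each term with its transpose
into `2 tr(Σ EᵀH) + 2 tr(Σ FᵀH')`.
-/

open Matrix

noncomputable section

/-- Spectral (operator 2-) norm of a real matrix. -/
def specNorm {m n : ℕ} (M : Matrix (Fin m) (Fin n) ℝ) : ℝ :=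
  ‖LinearMap.toContinuousLinearMap (Matrix.toEuclideanLin M)‖

/-- Smallest (real) eigenvalue of a matrix, as the infimum of its real spectrum. -/
def lamMin {n : ℕ} (M : Matrix (Fin n) (Fin n) ℝ) : ℝ :=
  sInf (spectrum ℝ M)

/-- The data of a zero-sum LQ game. -/
structure LQ (d m₁ m₂ : ℕ) where
  A : Matrix (Fin d) (Fin d) ℝ
  B : Matrix (Fin d) (Fin m₁) ℝ
  C : Matrix (Fin d) (Fin m₂) ℝ
  Q : Matrix (Fin d) (Fin d) ℝ
  Ru : Matrix (Fin m₁) (Fin m₁) ℝ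
  Rv : Matrix (Fin m₂) (Fin m₂) ℝ
  hQ : Q.PosDef
  hRu : Ru.PosDef
  hRv : Rv.PosDef

namespace LQ

variable {d m₁ m₂ : ℕ} (S : LQ d m₁ m₂)

/-- Closed-loop matrix `A - B*K - C*L`. -/
def cl (K : Matrix (Fin m₁) (Fin d) ℝ) (L : Matrix (Fin m₂) (Fin d) ℝ) :
    Matrix (Fin d) (Fin d) ℝ :=
  S.A - S.B * K - S.C * L

/-- A pair `(K, L)` is stabilizing if `ρ(A - BK - CL) < 1`. -/
def IsStabilizing (K : Matrix (Fin m₁) (Fin d) ℝ) (L : Matrix (Fin m₂) (Fin d) ℝ) : Prop :=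
  specRad (S.cl K L) < 1

/-- `P_{K,L} = Σ_{t≥0} ((A-BK-CL)ᵀ)ᵗ (Q + KᵀRᵘK - LᵀRᵛL) (A-BK-CL)ᵗ`. -/
def P (K : Matrix (Fin m₁) (Fin d) ℝ) (L : Matrix (Fin m₂) (Fin d) ℝ) :
    Matrix (Fin d) (Fin d) ℝ :=
  ∑' t : ℕ, ((S.cl K L)ᵀ) ^ t * (S.Q + Kᵀ * S.Ru * K - Lᵀ * S.Rv * L) * (S.cl K L) ^ t

/-- `Σ_{K,L} = Σ_{t≥0} (A-BK-CL)ᵗ Sig0 ((A-BK-CL)ᵀ)ᵗ`. -/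
def Sig (Sig0 : Matrix (Fin d) (Fin d) ℝ) (K : Matrix (Fin m₁) (Fin d) ℝ)
    (L : Matrix (Fin m₂) (Fin d) ℝ) : Matrix (Fin d) (Fin d) ℝ :=
  ∑' t : ℕ, (S.cl K L) ^ t * Sig0 * ((S.cl K L)ᵀ) ^ t

/-- The cost `C(K,L) = tr(Sig0 P_{K,L})`. -/
def cost (Sig0 : Matrix (Fin d) (Fin d) ℝ) (K : Matrix (Fin m₁) (Fin d) ℝ)
    (L : Matrix (Fin m₂) (Fin d) ℝ) : ℝ :=
  (Sig0 * S.P K L).trace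

/-- `E_{K,L} = (Rᵘ + Bᵀ P_{K,L} B) K - Bᵀ P_{K,L} (A - CL)`. -/
def E (K : Matrix (Fin m₁) (Fin d) ℝ) (L : Matrix (Fin m₂) (Fin d) ℝ) :
    Matrix (Fin m₁) (Fin d) ℝ :=
  (S.Ru + (S.B)ᵀ * S.P K L * S.B) * K - (S.B)ᵀ * S.P K L * (S.A - S.C * L)

/-- `F_{K,L} = (-Rᵛ + Cᵀ P_{K,L} C) L - Cᵀ P_{K,L} (A - BK)`. -/
def F (K : Matrix (Fin m₁) (Fin d) ℝ) (L : Matrix (Fin m₂) (Fin d) ℝ) :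
    Matrix (Fin m₂) (Fin d) ℝ :=
  (-S.Rv + (S.C)ᵀ * S.P K L * S.C) * L - (S.C)ᵀ * S.P K L * (S.A - S.B * K)

/-- The value function `V_{K,L}(x) = xᵀ P_{K,L} x`. -/
def V (K : Matrix (Fin m₁) (Fin d) ℝ) (L : Matrix (Fin m₂) (Fin d) ℝ) (x : Fin d → ℝ) : ℝ :=
  x ⬝ᵥ (S.P K L *ᵥ x)

/-- The advantage function `A_{K,L}(x,u,v)`. -/
def Adv (K : Matrix (Fin m₁) (Fin d) ℝ) (L : Matrix (Fin m₂) (Fin d) ℝ)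
    (x : Fin d → ℝ) (u : Fin m₁ → ℝ) (v : Fin m₂ → ℝ) : ℝ :=
  x ⬝ᵥ (S.Q *ᵥ x) + u ⬝ᵥ (S.Ru *ᵥ u) - v ⬝ᵥ (S.Rv *ᵥ v)
    + (S.A *ᵥ x + S.B *ᵥ u + S.C *ᵥ v) ⬝ᵥ (S.P K L *ᵥ (S.A *ᵥ x + S.B *ᵥ u + S.C *ᵥ v))
    - x ⬝ᵥ (S.P K L *ᵥ x)

/-- `Ã_L = A - CL`. -/
def At (L : Matrix (Fin m₂) (Fin d) ℝ) : Matrix (Fin d) (Fin d) ℝ := S.A - S.C * L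

/-- `P` satisfies the inner Riccati equation for `L`. -/
def Riccati (L : Matrix (Fin m₂) (Fin d) ℝ) (P : Matrix (Fin d) (Fin d) ℝ) : Prop :=
  P = (S.Q - Lᵀ * S.Rv * L) + (S.At L)ᵀ * P * S.At L
      - (S.At L)ᵀ * P * S.B * (S.Ru + (S.B)ᵀ * P * S.B)⁻¹ * (S.B)ᵀ * P * S.At L

/-- `K_P(L) = (Rᵘ + BᵀPB)⁻¹ BᵀP Ã_L`. -/
def KP (L : Matrix (Fin m₂) (Fin d) ℝ) (P : Matrix (Fin d) (Fin d) ℝ) :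
    Matrix (Fin m₁) (Fin d) ℝ :=
  (S.Ru + (S.B)ᵀ * P * S.B)⁻¹ * (S.B)ᵀ * P * S.At L

/-- `F_P(L) = (-Rᵛ + CᵀPC) L - CᵀP (A - B K_P(L))`. -/
def FP (L : Matrix (Fin m₂) (Fin d) ℝ) (P : Matrix (Fin d) (Fin d) ℝ) :
    Matrix (Fin m₂) (Fin d) ℝ :=
  (-S.Rv + (S.C)ᵀ * P * S.C) * L - (S.C)ᵀ * P * (S.A - S.B * S.KP L P)

/-- `W_P(L) = Rᵛ - Cᵀ[P - PB(Rᵘ + BᵀPB)⁻¹BᵀP]C`. -/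
def WP (L : Matrix (Fin m₂) (Fin d) ℝ) (P : Matrix (Fin d) (Fin d) ℝ) :
    Matrix (Fin m₂) (Fin m₂) ℝ :=
  S.Rv - (S.C)ᵀ * (P - P * S.B * (S.Ru + (S.B)ᵀ * P * S.B)⁻¹ * (S.B)ᵀ * P) * S.C

end LQ

attribute [local instance] Matrix.normedAddCommGroup Matrix.normedSpace

/-! ### Geometric series and two-sided equations in normed algebras -/

section Banach

open Filter Topology

/-- By Gelfand's formula the norms `‖a ^ n‖` are eventually dominated by a geometric sequence of
ratio strictly between the spectral radius and `1`. -/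
theorem summable_norm_pow_of_spectralRadius_lt_one {A : Type*} [NormedRing A] [NormedAlgebra ℂ A]
    [FiniteDimensional ℂ A] {a : A} (ha : spectralRadius ℂ a < 1) :
    Summable fun n : ℕ => ‖a ^ n‖ := by
  have : CompleteSpace A := FiniteDimensional.complete ℂ A
  obtain ⟨r, har, hr⟩ := exists_between ha
  lift r to NNReal using (hr.trans ENNReal.one_lt_top).ne
  have hr1 : (r : ℝ) < 1 := by exact_mod_cast hr
  have hG := spectrum.pow_nnnorm_pow_one_div_tendsto_nhds_spectralRadius a
  refine Summable.of_norm_bounded_eventually_nat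
    (summable_geometric_of_lt_one r.2 hr1) ?_
  filter_upwards [hG.eventually_lt_const har, eventually_gt_atTop 0] with n hn hn0
  have hn0' : (0 : ℝ) < n := by exact_mod_cast hn0
  have h1 : ((‖a ^ n‖₊ : ENNReal) ^ (1 / n : ℝ)) ^ (n : ℝ) ≤ (r : ENNReal) ^ (n : ℝ) :=
    ENNReal.rpow_le_rpow hn.le hn0'.le
  rw [← ENNReal.rpow_mul, one_div_mul_cancel hn0'.ne', ENNReal.rpow_one, ENNReal.rpow_natCast]
    at h1
  have h2 : ‖a ^ n‖₊ ≤ r ^ n := by exact_mod_cast h1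
  simpa using (show (‖a ^ n‖ : ℝ) ≤ (r : ℝ) ^ n by exact_mod_cast h2)

theorem summable_pow_of_spectralRadius_lt_one {A : Type*} [NormedRing A] [NormedAlgebra ℂ A]
    [FiniteDimensional ℂ A] {a : A} (ha : spectralRadius ℂ a < 1) :
    Summable fun n : ℕ => a ^ n := by
  have : CompleteSpace A := FiniteDimensional.complete ℂ A
  exact (summable_norm_pow_of_spectralRadius_lt_one ha).of_norm

/-- `spectralRadius b ≤ ‖b ^ (n + 1)‖ ^ (1 / (n + 1))`, and for a fixed large `n` the right-hand side
is continuous in `b` and less than `1` at `a`; so the condition is open. -/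
theorem eventually_spectralRadius_lt_one {A : Type*} [NormedRing A] [NormedAlgebra ℂ A]
    [FiniteDimensional ℂ A] [NormOneClass A] {a : A} (ha : spectralRadius ℂ a < 1) :
    ∀ᶠ b in 𝓝 a, spectralRadius ℂ b < 1 := by
  have : CompleteSpace A := FiniteDimensional.complete ℂ A
  have h0 := (summable_norm_pow_of_spectralRadius_lt_one ha).tendsto_atTop_zero
  obtain ⟨n, hn⟩ := ((tendsto_add_atTop_iff_nat 1).2 h0).eventually_lt_const one_pos |>.exists
  have hc : Continuous fun b : A => ‖b ^ (n + 1)‖ := by fun_prop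
  filter_upwards [hc.continuousAt.eventually_lt_const hn] with b hb
  refine (spectrum.spectralRadius_le_pow_nnnorm_pow_one_div ℂ b n).trans_lt ?_
  simp only [nnnorm_one, ENNReal.coe_one, ENNReal.one_rpow, mul_one]
  refine ENNReal.rpow_lt_one ?_ (by positivity)
  exact_mod_cast hb

/-- The hypotheses are plain summability, and the conclusion involves only the topology of `R`, so
that the lemma transfers to matrices without fixing a norm there. Finite dimension upgrades
summability to absolute summability. -/
theorem summable_mul_mul {R : Type*} [NormedRing R] [NormedAlgebra ℝ R] [FiniteDimensional ℝ R]
    {a b : ℕ → R} (w : R) (ha : Summable a) (hb : Summable b) :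
    Summable fun n => a n * w * b n := by
  have : CompleteSpace R := FiniteDimensional.complete ℝ R
  replace ha := summable_norm_iff.2 ha
  replace hb := summable_norm_iff.2 hb
  obtain ⟨C, hC⟩ := ha.tendsto_atTop_zero.bddAbove_range
  refine Summable.of_norm_bounded (hb.mul_left (C * ‖w‖)) fun n => ?_
  calc ‖a n * w * b n‖ ≤ ‖a n‖ * ‖w‖ * ‖b n‖ :=
        (norm_mul_le _ _).trans (by gcongr; exact norm_mul_le _ _)
    _ ≤ C * ‖w‖ * ‖b n‖ := by gcongr; exact hC ⟨n, rfl⟩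

/-- The Lyapunov (Stein) equation satisfied by the series `∑ aⁿ w bⁿ`: split off the zeroth term. -/
theorem tsum_sandwich_eq {R : Type*} [Ring R] [TopologicalSpace R] [IsTopologicalRing R]
    [T2Space R] {a b w : R} (h : Summable fun n : ℕ => a ^ n * w * b ^ n) :
    ∑' n : ℕ, a ^ n * w * b ^ n = w + a * (∑' n : ℕ, a ^ n * w * b ^ n) * b := by
  conv_lhs => rw [h.tsum_eq_zero_add]
  rw [← h.tsum_mul_left, ← (h.mul_left a).tsum_mul_right]
  simp [pow_succ' a, pow_succ b, mul_assoc]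

/-- Uniqueness for the Stein equation: a solution `z` of the homogeneous equation equals `aⁿ z bⁿ` for
every `n`, and these terms tend to `0`. -/
theorem eq_zero_of_eq_sandwich {R : Type*} [Ring R] [TopologicalSpace R] [IsTopologicalRing R]
    [T2Space R] {a b z : R} (h : Summable fun n : ℕ => a ^ n * z * b ^ n)
    (hz : z = a * z * b) : z = 0 := by
  have hn : ∀ n : ℕ, a ^ n * z * b ^ n = z := by
    intro n
    induction n with
    | zero => simp
    | succ n ih =>
      calc a ^ (n + 1) * z * b ^ (n + 1) = a ^ n * (a * z * b) * b ^ n := by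
            simp only [pow_succ a, pow_succ' b, mul_assoc]
        _ = z := by rw [← hz, ih]
  have := h.tendsto_atTop_zero
  simp only [hn] at this
  exact tendsto_nhds_unique tendsto_const_nhds this

/-- A solution `P` of the parametrized equation `P = w + a P b` is differentiable where the data are
and the homogeneous equation has only the zero solution: `P = T⁻¹ w` for the operator
`T z = z - a z b`, which is invertible at `x`, and inversion is differentiable at units. -/
theorem differentiableAt_of_eq_sandwich {E R : Type*} [NormedAddCommGroup E] [NormedSpace ℝ E]
    [NormedRing R] [NormedAlgebra ℝ R] [FiniteDimensional ℝ R] {a b w P : E → R} {x : E}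
    (ha : DifferentiableAt ℝ a x) (hb : DifferentiableAt ℝ b x) (hw : DifferentiableAt ℝ w x)
    (hP : ∀ᶠ y in 𝓝 x, P y = w y + a y * P y * b y)
    (hinj : ∀ z : R, z = a x * z * b x → z = 0) : DifferentiableAt ℝ P x := by
  have : CompleteSpace R := FiniteDimensional.complete ℝ R
  let T : E → (R →L[ℝ] R) := fun y =>
    1 - ContinuousLinearMap.mulLeftRight ℝ R (a y) (b y)
  have hTapp : ∀ y z, T y z = z - a y * z * b y := fun y z => by simp [T]
  have hT : DifferentiableAt ℝ T x :=
    (((ContinuousLinearMap.mulLeftRight ℝ R).differentiableAt.comp x ha).clm_apply hb).const_sub 1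
  have hU : IsUnit (T x) := by
    rw [ContinuousLinearMap.isUnit_iff_bijective]
    have hi : Function.Injective (T x) := by
      rw [injective_iff_map_eq_zero]
      intro z hz
      rw [hTapp] at hz
      exact hinj z (sub_eq_zero.1 hz)
    exact ⟨hi, LinearMap.injective_iff_surjective (f := (T x : R →ₗ[ℝ] R)) |>.1 hi⟩
  have hd : DifferentiableAt ℝ (fun y => (Ring.inverse (T y)) (w y)) x :=
    (hT.inverse hU).clm_apply hw
  refine hd.congr_of_eventuallyEq ?_
  have hUn : ∀ᶠ y in 𝓝 x, IsUnit (T y) :=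
    hT.continuousAt.eventually (Units.isOpen.mem_nhds hU)
  filter_upwards [hP, hUn] with y hy hu
  have h1 : w y = T y (P y) := by
    rw [hTapp, eq_sub_iff_add_eq]
    exact hy.symm
  rw [h1, ← mul_apply_eq_comp, Ring.inverse_mul_cancel _ hu]
  rfl

theorem hasDerivAt_add_smul_add_sq_smul {R : Type*} [NormedAddCommGroup R] [NormedSpace ℝ R]
    (X Y Z : R) : HasDerivAt (fun s : ℝ => X + s • Y + s ^ 2 • Z) Y 0 := by
  have h := (((hasDerivAt_id (0 : ℝ)).smul_const Y).const_add X).add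
    (((hasDerivAt_id (0 : ℝ)).pow 2).smul_const Z)
  simpa using! h

/-- The product rule applied to `P = w + a P b`. -/
theorem deriv_eq_of_eq_sandwich {R : Type*} [NormedRing R] [NormedAlgebra ℝ R]
    {a b w P : ℝ → R} {a' b' w' P' : R} (ha : HasDerivAt a a' 0) (hb : HasDerivAt b b' 0)
    (hw : HasDerivAt w w' 0) (hP : HasDerivAt P P' 0)
    (h : ∀ᶠ s in 𝓝 0, P s = w s + a s * P s * b s) :
    P' = w' + ((a' * P 0 + a 0 * P') * b 0 + a 0 * P 0 * b') :=
  hP.unique ((hw.add ((ha.mul hP).mul hb)).congr_of_eventuallyEq h)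

end Banach

/-! ### Powers of stable matrices -/

namespace LQ


open Filter Topology

/-- Stability is an open condition, and it makes the powers summable. The spectral radius is that of
the complexification, so the complex series is summed first and its real part is taken. The
operator norm is only an auxiliary device: the statement depends on the topology alone. -/
theorem eventually_summable_pow {n : ℕ} {M : Matrix (Fin n) (Fin n) ℝ} (hM : specRad M < 1) :
    ∀ᶠ N in 𝓝 M, Summable fun t : ℕ => N ^ t := by
  -- For `n = 0` the matrix algebra is trivial and `‖1‖ = 1` fails, so this case is separate.
  rcases isEmpty_or_nonempty (Fin n) with hn | hn
  · refine Eventually.of_forall fun N => ?_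
    have : (fun t : ℕ => N ^ t) = fun _ => 0 := funext fun t => Subsingleton.elim _ _
    rw [this]; exact summable_zero
  let := Matrix.linftyOpNormedRing (n := Fin n) (α := ℂ)
  let := Matrix.linftyOpNormedAlgebra (R := ℂ) (n := Fin n) (α := ℂ)
  have h1 := eventually_spectralRadius_lt_one (a := M.map (algebraMap ℝ ℂ)) hM
  have hc : Continuous fun N : Matrix (Fin n) (Fin n) ℝ => N.map (algebraMap ℝ ℂ) :=
    continuous_id.matrix_map (Complex.continuous_ofReal)
  filter_upwards [hc.continuousAt.eventually h1] with N hN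
  have h2 := summable_pow_of_spectralRadius_lt_one hN
  have h3 := h2.map (Complex.reCLM.toLinearMap.toAddMonoidHom.mapMatrix (m := Fin n) (n := Fin n))
    (continuous_id.matrix_map Complex.continuous_re)
  refine h3.congr fun t => ?_
  have hpow : (N.map (algebraMap ℝ ℂ)) ^ t = (N ^ t).map (algebraMap ℝ ℂ) :=
    (map_pow (algebraMap ℝ ℂ).mapMatrix N t).symm
  simp only [Function.comp_apply, hpow]
  ext i j
  simp

theorem summable_pow_mul_mul_pow {n : ℕ} {M N : Matrix (Fin n) (Fin n) ℝ}
    (hM : Summable fun t : ℕ => M ^ t) (hN : Summable fun t : ℕ => N ^ t)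
    (W : Matrix (Fin n) (Fin n) ℝ) : Summable fun t : ℕ => M ^ t * W * N ^ t := by
  let := Matrix.linftyOpNormedRing (n := Fin n) (α := ℝ)
  let := Matrix.linftyOpNormedAlgebra (R := ℝ) (n := Fin n) (α := ℝ)
  exact summable_mul_mul W hM hN

theorem summable_transpose_pow {n : ℕ} {M : Matrix (Fin n) (Fin n) ℝ}
    (hM : Summable fun t : ℕ => M ^ t) : Summable fun t : ℕ => Mᵀ ^ t := by
  simpa only [transpose_pow] using hM.matrix_transpose

/-- `differentiableAt_of_eq_sandwich` for matrices, whose topology is that of the `ℓ^∞` operator norm. -/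
theorem differentiableAt_of_eq_sandwich_matrix {n : ℕ} {E : Type*} [NormedAddCommGroup E]
    [NormedSpace ℝ E] {a b w P : E → Matrix (Fin n) (Fin n) ℝ} {x : E}
    (ha : DifferentiableAt ℝ a x) (hb : DifferentiableAt ℝ b x) (hw : DifferentiableAt ℝ w x)
    (hP : ∀ᶠ y in 𝓝 x, P y = w y + a y * P y * b y)
    (hinj : ∀ z : Matrix (Fin n) (Fin n) ℝ, z = a x * z * b x → z = 0) :
    DifferentiableAt ℝ P x := by
  let := Matrix.linftyOpNormedRing (n := Fin n) (α := ℝ)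
  let := Matrix.linftyOpNormedAlgebra (R := ℝ) (n := Fin n) (α := ℝ)
  exact differentiableAt_of_eq_sandwich ha hb hw hP hinj

/-- `deriv_eq_of_eq_sandwich` for matrices, whose topology is that of the `ℓ^∞` operator norm. -/
theorem deriv_eq_of_eq_sandwich_matrix {n : ℕ} {a b w P : ℝ → Matrix (Fin n) (Fin n) ℝ}
    {a' b' w' P' : Matrix (Fin n) (Fin n) ℝ} (ha : HasDerivAt a a' 0) (hb : HasDerivAt b b' 0)
    (hw : HasDerivAt w w' 0) (hP : HasDerivAt P P' 0)
    (h : ∀ᶠ s in 𝓝 0, P s = w s + a s * P s * b s) :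
    P' = w' + ((a' * P 0 + a 0 * P') * b 0 + a 0 * P 0 * b') := by
  let := Matrix.linftyOpNormedRing (n := Fin n) (α := ℝ)
  let := Matrix.linftyOpNormedAlgebra (R := ℝ) (n := Fin n) (α := ℝ)
  exact deriv_eq_of_eq_sandwich ha hb hw hP h

/-! ### The Lyapunov equations of the game -/

variable {d m₁ m₂ : ℕ} (S : LQ d m₁ m₂)

/-- The one-stage cost matrix `Q + KᵀRᵘK - LᵀRᵛL` under the linear policies `K`, `L`. -/
def stage (K : Matrix (Fin m₁) (Fin d) ℝ) (L : Matrix (Fin m₂) (Fin d) ℝ) :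
    Matrix (Fin d) (Fin d) ℝ :=
  S.Q + Kᵀ * S.Ru * K - Lᵀ * S.Rv * L

theorem continuous_cl : Continuous
    fun p : Matrix (Fin m₁) (Fin d) ℝ × Matrix (Fin m₂) (Fin d) ℝ => S.cl p.1 p.2 := by
  unfold cl
  exact (continuous_const.sub (continuous_const.matrix_mul continuous_fst)).sub
    (continuous_const.matrix_mul continuous_snd)

/-- The continuous linear functional `Y ↦ tr(X Y)`. -/
def traceMulLeft (X : Matrix (Fin d) (Fin d) ℝ) : Matrix (Fin d) (Fin d) ℝ →L[ℝ] ℝ :=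
  LinearMap.toContinuousLinearMap
    (Matrix.traceLinearMap (Fin d) ℝ ℝ ∘ₗ LinearMap.mulLeft ℝ X)

variable {K : Matrix (Fin m₁) (Fin d) ℝ} {L : Matrix (Fin m₂) (Fin d) ℝ}

theorem P_eq (h : Summable fun t : ℕ => S.cl K L ^ t) :
    S.P K L = S.stage K L + (S.cl K L)ᵀ * S.P K L * S.cl K L :=
  tsum_sandwich_eq (summable_pow_mul_mul_pow (summable_transpose_pow h) h _)

theorem Sig_eq (Sig0 : Matrix (Fin d) (Fin d) ℝ) (h : Summable fun t : ℕ => S.cl K L ^ t) :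
    S.Sig Sig0 K L = Sig0 + S.cl K L * S.Sig Sig0 K L * (S.cl K L)ᵀ :=
  tsum_sandwich_eq (summable_pow_mul_mul_pow h (summable_transpose_pow h) _)

theorem transpose_P : (S.P K L)ᵀ = S.P K L := by
  have hQ : S.Qᵀ = S.Q := by simpa using S.hQ.isHermitian.eq
  have hu : S.Ruᵀ = S.Ru := by simpa using S.hRu.isHermitian.eq
  have hv : S.Rvᵀ = S.Rv := by simpa using S.hRv.isHermitian.eq
  unfold P
  rw [Matrix.transpose_tsum]
  congr 1; funext t
  simp [transpose_mul, transpose_pow, hQ, hu, hv, Matrix.mul_assoc]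

theorem transpose_Sig {Sig0 : Matrix (Fin d) (Fin d) ℝ} (h0 : Sig0ᵀ = Sig0) :
    (S.Sig Sig0 K L)ᵀ = S.Sig Sig0 K L := by
  unfold Sig
  rw [Matrix.transpose_tsum]
  congr 1; funext t
  simp [transpose_mul, transpose_pow, h0, Matrix.mul_assoc]

/-! ### Differentiation of the cost -/

theorem differentiable_cl : Differentiable ℝ
    fun p : Matrix (Fin m₁) (Fin d) ℝ × Matrix (Fin m₂) (Fin d) ℝ => S.cl p.1 p.2 := by
  refine differentiable_pi.2 fun i => differentiable_pi.2 fun j => ?_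
  simp only [cl, Matrix.sub_apply, Matrix.mul_apply]
  fun_prop

theorem differentiable_cl_transpose : Differentiable ℝ
    fun p : Matrix (Fin m₁) (Fin d) ℝ × Matrix (Fin m₂) (Fin d) ℝ => (S.cl p.1 p.2)ᵀ := by
  refine differentiable_pi.2 fun i => differentiable_pi.2 fun j => ?_
  simp only [cl, Matrix.transpose_apply, Matrix.sub_apply, Matrix.mul_apply]
  fun_prop

theorem differentiable_stage : Differentiable ℝ
    fun p : Matrix (Fin m₁) (Fin d) ℝ × Matrix (Fin m₂) (Fin d) ℝ => S.stage p.1 p.2 := by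
  refine differentiable_pi.2 fun i => differentiable_pi.2 fun j => ?_
  simp only [stage, Matrix.sub_apply, Matrix.add_apply, Matrix.mul_apply, Matrix.transpose_apply]
  fun_prop

theorem differentiableAt_P (h : S.IsStabilizing K L) : DifferentiableAt ℝ
    (fun p : Matrix (Fin m₁) (Fin d) ℝ × Matrix (Fin m₂) (Fin d) ℝ => S.P p.1 p.2) (K, L) := by
  have hs : ∀ᶠ p : Matrix (Fin m₁) (Fin d) ℝ × Matrix (Fin m₂) (Fin d) ℝ in 𝓝 (K, L),
      Summable fun t : ℕ => S.cl p.1 p.2 ^ t := by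
    have hc : ContinuousAt (fun p : Matrix (Fin m₁) (Fin d) ℝ × Matrix (Fin m₂) (Fin d) ℝ =>
      S.cl p.1 p.2) (K, L) := S.continuous_cl.continuousAt
    have h' : ∀ᶠ N in 𝓝 (S.cl K L), Summable fun t : ℕ => N ^ t := eventually_summable_pow h
    exact hc.eventually h'
  have h0 : Summable fun t : ℕ => S.cl K L ^ t := hs.self_of_nhds
  have hinj : ∀ z : Matrix (Fin d) (Fin d) ℝ, z = (S.cl K L)ᵀ * z * S.cl K L → z = 0 :=
    fun z => eq_zero_of_eq_sandwich
      (summable_pow_mul_mul_pow (summable_transpose_pow h0) h0 z)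
  exact differentiableAt_of_eq_sandwich_matrix (S.differentiable_cl_transpose (K, L))
    (S.differentiable_cl (K, L)) (S.differentiable_stage (K, L))
    (hs.mono fun p hp => S.P_eq hp) hinj

/-- Differentiating the Lyapunov equation of `P` along the line through `(K, L)` in the direction
`(H, H')` shows that the derivative of `P` solves a Lyapunov equation with the same closed-loop
matrix; collecting terms, its source is `HᵀE + EᵀH + H'ᵀF + FᵀH'`. -/
theorem hasDerivAt_P_line (h : S.IsStabilizing K L) (H : Matrix (Fin m₁) (Fin d) ℝ)
    (H' : Matrix (Fin m₂) (Fin d) ℝ) :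
    ∃ P' : Matrix (Fin d) (Fin d) ℝ,
      HasDerivAt (fun s : ℝ => S.P (K + s • H) (L + s • H')) P' 0 ∧
      P' = (Hᵀ * S.E K L + (S.E K L)ᵀ * H + (H'ᵀ * S.F K L + (S.F K L)ᵀ * H')) +
        (S.cl K L)ᵀ * P' * S.cl K L := by
  let γ : ℝ → Matrix (Fin m₁) (Fin d) ℝ × Matrix (Fin m₂) (Fin d) ℝ :=
    fun s => (K + s • H, L + s • H')
  have hγ0 : γ 0 = (K, L) := by simp [γ]
  have hγ : DifferentiableAt ℝ γ 0 := by fun_prop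
  have hs : ∀ᶠ s : ℝ in 𝓝 0, Summable fun t : ℕ => S.cl (γ s).1 (γ s).2 ^ t := by
    have hc : ContinuousAt (fun s => S.cl (γ s).1 (γ s).2) 0 :=
      (S.continuous_cl.continuousAt (x := γ 0)).comp hγ.continuousAt
    have h' : specRad (S.cl (γ 0).1 (γ 0).2) < 1 := by rw [hγ0]; exact h
    exact hc.eventually (eventually_summable_pow h')
  have hPd : DifferentiableAt ℝ (fun s : ℝ => S.P (K + s • H) (L + s • H')) 0 := by
    have := S.differentiableAt_P h
    rw [← hγ0] at this
    exact this.comp (0 : ℝ) hγ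
  obtain ⟨P', hP'⟩ : ∃ P', HasDerivAt (fun s : ℝ => S.P (K + s • H) (L + s • H')) P' 0 :=
    ⟨_, hPd.hasDerivAt⟩
  refine ⟨P', hP', ?_⟩
  have hquad : ∀ X Y Z : Matrix (Fin d) (Fin d) ℝ,
      HasDerivAt (fun s : ℝ => X + s • Y + s ^ 2 • Z) Y 0 :=
    hasDerivAt_add_smul_add_sq_smul
  have hlin : ∀ X Y : Matrix (Fin d) (Fin d) ℝ, HasDerivAt (fun s : ℝ => X + s • Y) Y 0 := by
    intro X Y
    simpa using hquad X Y 0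
  have hM : ∀ s : ℝ, S.cl (K + s • H) (L + s • H') =
      S.cl K L + s • (-(S.B * H) - S.C * H') := by
    intro s
    simp only [cl, Matrix.mul_add, Matrix.mul_smul, smul_sub, smul_neg]
    abel
  have hW : ∀ s : ℝ, S.stage (K + s • H) (L + s • H') = S.stage K L
      + s • (Hᵀ * S.Ru * K + Kᵀ * S.Ru * H - (H'ᵀ * S.Rv * L + Lᵀ * S.Rv * H'))
      + s ^ 2 • (Hᵀ * S.Ru * H - H'ᵀ * S.Rv * H') := by
    intro s
    simp only [stage, transpose_add, transpose_smul, Matrix.mul_add, Matrix.add_mul,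
      Matrix.mul_smul, Matrix.smul_mul, smul_sub, smul_add, smul_smul, sq]
    abel
  have hMd : HasDerivAt (fun s : ℝ => S.cl (K + s • H) (L + s • H'))
      (-(S.B * H) - S.C * H') 0 := by
    simp only [hM]; exact hlin _ _
  have hMTd : HasDerivAt (fun s : ℝ => (S.cl (K + s • H) (L + s • H'))ᵀ)
      (-(S.B * H) - S.C * H')ᵀ 0 := by
    simp only [hM, transpose_add, transpose_smul]; exact hlin _ _
  have hWd : HasDerivAt (fun s : ℝ => S.stage (K + s • H) (L + s • H'))
      (Hᵀ * S.Ru * K + Kᵀ * S.Ru * H - (H'ᵀ * S.Rv * L + Lᵀ * S.Rv * H')) 0 := by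
    simp only [hW]; exact hquad _ _ _
  have key := deriv_eq_of_eq_sandwich_matrix hMTd hMd hWd hP' (hs.mono fun s hs => S.P_eq hs)
  have hu : S.Ruᵀ = S.Ru := by simpa using S.hRu.isHermitian.eq
  have hv : S.Rvᵀ = S.Rv := by simpa using S.hRv.isHermitian.eq
  have hP := S.transpose_P (K := K) (L := L)
  have hE : S.E K L = S.Ru * K - S.Bᵀ * S.P K L * S.cl K L := by
    simp only [E, cl, Matrix.mul_sub, Matrix.add_mul, Matrix.mul_assoc]; abel
  have hF : S.F K L = -(S.Rv * L) - S.Cᵀ * S.P K L * S.cl K L := by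
    simp only [F, cl, Matrix.mul_sub, Matrix.add_mul, Matrix.neg_mul, Matrix.mul_assoc]; abel
  have hET : (S.E K L)ᵀ = Kᵀ * S.Ru - (S.cl K L)ᵀ * S.P K L * S.B := by
    simp [hE, transpose_mul, hu, hP, Matrix.mul_assoc]
  have hFT : (S.F K L)ᵀ = -(Lᵀ * S.Rv) - (S.cl K L)ᵀ * S.P K L * S.C := by
    simp [hF, transpose_mul, hv, hP, Matrix.mul_assoc]
  simp only [zero_smul, add_zero] at key
  rw [hET, hFT, hE, hF]
  refine key.trans ?_
  simp only [transpose_sub, transpose_neg, transpose_mul, Matrix.mul_sub, Matrix.sub_mul,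
    Matrix.add_mul, Matrix.mul_neg, Matrix.neg_mul, Matrix.mul_assoc]
  abel

/-- The operators `X ↦ X - M X Mᵀ` and `Y ↦ Y - Mᵀ Y M` are adjoint for the trace pairing. -/
theorem trace_mul_eq_of_lyapunov {n : ℕ} {M X Y X0 Y0 : Matrix (Fin n) (Fin n) ℝ}
    (hX : X = X0 + M * X * Mᵀ) (hY : Y = Y0 + Mᵀ * Y * M) :
    (X0 * Y).trace = (X * Y0).trace := by
  have h1 : (X * Y).trace = (X0 * Y).trace + (M * X * Mᵀ * Y).trace := by
    rw [← trace_add, ← Matrix.add_mul, ← hX]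
  have h2 : (X * Y).trace = (X * Y0).trace + (X * (Mᵀ * Y * M)).trace := by
    rw [← trace_add, ← Matrix.mul_add, ← hY]
  have h3 : (M * X * Mᵀ * Y).trace = (X * (Mᵀ * Y * M)).trace := by
    rw [Matrix.mul_assoc, Matrix.mul_assoc, trace_mul_comm]
    simp only [Matrix.mul_assoc]
  linarith

/-- The derivative of the cost in the joint direction `(H, H')`; both partial gradients are special
cases. -/
theorem hasDerivAt_cost_line {Sig0 : Matrix (Fin d) (Fin d) ℝ} (h0 : Sig0ᵀ = Sig0)
    (h : S.IsStabilizing K L) (H : Matrix (Fin m₁) (Fin d) ℝ) (H' : Matrix (Fin m₂) (Fin d) ℝ) :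
    HasDerivAt (fun s : ℝ => S.cost Sig0 (K + s • H) (L + s • H'))
      (2 * (S.Sig Sig0 K L * (S.E K L)ᵀ * H).trace +
        2 * (S.Sig Sig0 K L * (S.F K L)ᵀ * H').trace) 0 := by
  obtain ⟨P', hP', hlyap⟩ := S.hasDerivAt_P_line h H H'
  have hsum := (eventually_summable_pow h).self_of_nhds
  have hS := S.transpose_Sig (K := K) (L := L) h0
  have hd := (traceMulLeft Sig0).hasFDerivAt.comp_hasDerivAt (0 : ℝ) hP'
  -- Since `Σ` is symmetric, transposing under the trace turns `XᵀG` into `GᵀX`.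
  have hsym : ∀ {m : ℕ} (G X : Matrix (Fin m) (Fin d) ℝ),
      (S.Sig Sig0 K L * (Xᵀ * G)).trace = (S.Sig Sig0 K L * Gᵀ * X).trace := by
    intro m G X
    rw [← trace_transpose, transpose_mul, transpose_mul, transpose_transpose, hS,
      trace_mul_comm, Matrix.mul_assoc]
  have hval : (Sig0 * P').trace = 2 * (S.Sig Sig0 K L * (S.E K L)ᵀ * H).trace +
      2 * (S.Sig Sig0 K L * (S.F K L)ᵀ * H').trace := by
    rw [trace_mul_eq_of_lyapunov (S.Sig_eq Sig0 hsum) hlyap]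
    simp only [Matrix.mul_add, trace_add, hsym _ H, hsym _ H']
    simp only [← Matrix.mul_assoc]
    ring
  rw [← hval]
  exact hd

end LQ

open LQ in
/-- Policy gradient expression: the cost is differentiable on the set of stabilizing pairs, and
its directional derivatives are `H ↦ 2 tr(Σ_{K,L} E_{K,L}ᵀ H)` in `K` and
`H′ ↦ 2 tr(Σ_{K,L} F_{K,L}ᵀ H′)` in `L`; equivalently `∇_K C = 2 E_{K,L} Σ_{K,L}` and
`∇_L C = 2 F_{K,L} Σ_{K,L}`. -/
theorem policy_gradient_expression {d m₁ m₂ : ℕ} (S : LQ d m₁ m₂)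
    (Sig0 : Matrix (Fin d) (Fin d) ℝ) (hSig0 : Sig0.PosDef) :
    DifferentiableOn ℝ
      (fun p : Matrix (Fin m₁) (Fin d) ℝ × Matrix (Fin m₂) (Fin d) ℝ => S.cost Sig0 p.1 p.2)
      {p : Matrix (Fin m₁) (Fin d) ℝ × Matrix (Fin m₂) (Fin d) ℝ | S.IsStabilizing p.1 p.2} ∧
    ∀ (K : Matrix (Fin m₁) (Fin d) ℝ) (L : Matrix (Fin m₂) (Fin d) ℝ),
      S.IsStabilizing K L →
        (∀ H : Matrix (Fin m₁) (Fin d) ℝ,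
          HasDerivAt (fun s : ℝ => S.cost Sig0 (K + s • H) L)
            (2 * (S.Sig Sig0 K L * (S.E K L)ᵀ * H).trace) 0) ∧
        (∀ H' : Matrix (Fin m₂) (Fin d) ℝ,
          HasDerivAt (fun s : ℝ => S.cost Sig0 K (L + s • H'))
            (2 * (S.Sig Sig0 K L * (S.F K L)ᵀ * H').trace) 0) := by
  have h0 : Sig0ᵀ = Sig0 := by simpa using hSig0.isHermitian.eq
  refine ⟨fun p hp => ?_, fun K L h => ⟨fun H => ?_, fun H' => ?_⟩⟩
  · exact ((traceMulLeft Sig0).differentiableAt.comp p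
      (S.differentiableAt_P (K := p.1) (L := p.2) hp)).differentiableWithinAt
  · simpa using S.hasDerivAt_cost_line h0 h H 0
  · simpa using S.hasDerivAt_cost_line h0 h 0 H'
end
end

section
/- Suppose (K,L) and (K′,L′) are both stabilizing. Fix x ∈ ℝ^d and define the trajectory x′₀ = x, x′_{t+1} = (A − BK′ − CL′)x′_t, with controls u′_t = −K′x′_t and v′_t = −L′x′_t. Then the series Σ_{t≥0} A_{K,L}(x′_t, u′_t, v′_t) converges absolutely and its sum equals V_{K′,L′}(x) − V_{K,L}(x). -/
/-!
Write `M = A - BK' - CL'`, `W' = Q + K'ᵀRᵘK' - L'ᵀRᵛL'` and `xₜ = Mᵗ x`.  Along the trajectory the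
advantage splits as `xₜᵀ W' xₜ + (V_{K,L}(xₜ₊₁) - V_{K,L}(xₜ))`.  The first part sums to
`V_{K',L'}(x)` by the definition of `P_{K',L'}`; the second telescopes to `-V_{K,L}(x)`.

Convergence rests on `summable_conj_pow`: if `ρ(M) < 1`, then `Σ (Mᵀ)ᵗ W Mᵗ` converges for every
`W`, because by Gelfand's formula the entries of `Mᵗ` are eventually at most `rᵗ` for some `r < 1`.
With `W = W'` this makes the defining series of `P_{K',L'}` converge, and with `W = P_{K,L}` it makes
`Σ V_{K,L}(xₜ)` converge, so that the telescoping sum may be rearranged.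
-/

open Matrix

noncomputable section

attribute [local instance] Matrix.linftyOpNormedRing Matrix.linftyOpNormedAlgebra in
/-- Entrywise geometric decay of the powers of a matrix of spectral radius less than one, from
Gelfand's formula for the `ℓ^∞` operator norm of the complexification. -/
lemma exists_entry_pow_le {n : ℕ} (M : Matrix (Fin n) (Fin n) ℝ) (h : specRad M < 1) :
    ∃ r : ℝ, 0 ≤ r ∧ r < 1 ∧ ∀ᶠ t : ℕ in Filter.atTop, ∀ i j, |(M ^ t) i j| ≤ r ^ t := by
  obtain ⟨r, hr, hr1⟩ := ENNReal.lt_iff_exists_nnreal_btwn.1 h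
  have : CompleteSpace (Matrix (Fin n) (Fin n) ℂ) := FiniteDimensional.complete ℂ _
  have hG := spectrum.pow_nnnorm_pow_one_div_tendsto_nhds_spectralRadius
    (M.map (algebraMap ℝ ℂ))
  refine ⟨r, r.2, by exact_mod_cast hr1, ?_⟩
  filter_upwards [hG.eventually (gt_mem_nhds hr), Filter.eventually_gt_atTop 0] with t ht ht0 i j
  have hle : ‖(M.map (algebraMap ℝ ℂ)) ^ t‖₊ ≤ r ^ t := by
    have h1 := ENNReal.rpow_le_rpow ht.le (Nat.cast_nonneg (α := ℝ) t)
    rw [← ENNReal.rpow_mul, one_div, inv_mul_cancel₀ (by positivity), ENNReal.rpow_one,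
      ENNReal.rpow_natCast] at h1
    exact_mod_cast h1
  have hmap : (M.map (algebraMap ℝ ℂ)) ^ t = (M ^ t).map (algebraMap ℝ ℂ) :=
    (Matrix.map_pow M (algebraMap ℝ ℂ) t).symm
  rw [hmap, Matrix.linfty_opNNNorm_def] at hle
  have h2 : ‖((M ^ t) i j : ℂ)‖₊ ≤ r ^ t :=
    (Finset.single_le_sum (f := fun j => ‖((M ^ t).map (algebraMap ℝ ℂ)) i j‖₊)
      (fun _ _ => zero_le) (Finset.mem_univ j)).trans
      ((Finset.le_sup (f := fun i => ∑ j, ‖((M ^ t).map (algebraMap ℝ ℂ)) i j‖₊)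
        (Finset.mem_univ i)).trans hle)
  have h3 : ‖((M ^ t) i j : ℂ)‖ ≤ (r : ℝ) ^ t := by exact_mod_cast h2
  rwa [Complex.norm_real, Real.norm_eq_abs] at h3

lemma summable_conj_pow {n : ℕ} (M W : Matrix (Fin n) (Fin n) ℝ) (h : specRad M < 1) :
    Summable (fun t : ℕ => (Mᵀ) ^ t * W * M ^ t) := by
  obtain ⟨r, hr0, hr1, hM⟩ := exists_entry_pow_le M h
  refine Pi.summable.2 fun i => Pi.summable.2 fun j => ?_
  have hexp : ∀ t : ℕ, ((Mᵀ) ^ t * W * M ^ t) i j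
      = ∑ l, ∑ k, (M ^ t) k i * W k l * (M ^ t) l j := by
    intro t
    simp [← Matrix.transpose_pow, Matrix.mul_apply, Finset.sum_mul]
  simp only [hexp]
  refine summable_sum fun l _ => summable_sum fun k _ => ?_
  refine Summable.of_norm_bounded_eventually_nat
    ((summable_geometric_of_lt_one hr0 hr1).mul_left |W k l|) ?_
  filter_upwards [hM] with t ht
  have hrt : r ^ t ≤ 1 := pow_le_one₀ hr0 hr1.le
  rw [Real.norm_eq_abs, abs_mul, abs_mul]
  calc |(M ^ t) k i| * |W k l| * |(M ^ t) l j|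
      ≤ 1 * |W k l| * r ^ t := by
        gcongr
        · exact (ht k i).trans hrt
        · exact ht l j
    _ = |W k l| * r ^ t := by rw [one_mul]

/-- Evaluating the convergent matrix series on `x` gives the sum of `W` along the trajectory. -/
lemma hasSum_quadForm_pow {n : ℕ} (M W : Matrix (Fin n) (Fin n) ℝ) (h : specRad M < 1)
    (x : Fin n → ℝ) :
    HasSum (fun t : ℕ => (M ^ t *ᵥ x) ⬝ᵥ (W *ᵥ (M ^ t *ᵥ x)))
      (x ⬝ᵥ ((∑' t : ℕ, (Mᵀ) ^ t * W * M ^ t) *ᵥ x)) := by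
  let q : Matrix (Fin n) (Fin n) ℝ →+ ℝ :=
    { toFun := fun N => x ⬝ᵥ (N *ᵥ x)
      map_zero' := by simp
      map_add' := fun N N' => by simp [Matrix.add_mulVec] }
  have hq : Continuous q := by
    change Continuous fun N : Matrix (Fin n) (Fin n) ℝ => x ⬝ᵥ (N *ᵥ x)
    fun_prop
  have hs : HasSum _ (x ⬝ᵥ ((∑' t : ℕ, (Mᵀ) ^ t * W * M ^ t) *ᵥ x)) :=
    (summable_conj_pow M W h).hasSum.map q hq
  convert hs using 1
  funext t
  change _ = x ⬝ᵥ (((Mᵀ) ^ t * W * M ^ t) *ᵥ x)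
  rw [← Matrix.transpose_pow, ← Matrix.mulVec_mulVec, ← Matrix.mulVec_mulVec,
    Matrix.dotProduct_mulVec x, Matrix.vecMul_transpose]

/-- Along the feedback `u = -K'y`, `v = -L'y`, the advantage is the stage cost of `(K', L')` plus
the one-step increment of the value function of `(K, L)`. -/
lemma adv_feedback {d m₁ m₂ : ℕ} (S : LQ d m₁ m₂)
    (K K' : Matrix (Fin m₁) (Fin d) ℝ) (L L' : Matrix (Fin m₂) (Fin d) ℝ) (y : Fin d → ℝ) :
    S.Adv K L y (-(K' *ᵥ y)) (-(L' *ᵥ y))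
      = y ⬝ᵥ ((S.Q + K'ᵀ * S.Ru * K' - L'ᵀ * S.Rv * L') *ᵥ y)
        + (S.V K L (S.cl K' L' *ᵥ y) - S.V K L y) := by
  have hcl : S.A *ᵥ y + S.B *ᵥ (-(K' *ᵥ y)) + S.C *ᵥ (-(L' *ᵥ y)) = S.cl K' L' *ᵥ y := by
    rw [LQ.cl, Matrix.sub_mulVec, Matrix.sub_mulVec, Matrix.mulVec_neg, Matrix.mulVec_neg,
      Matrix.mulVec_mulVec, Matrix.mulVec_mulVec, ← sub_eq_add_neg, ← sub_eq_add_neg]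
  have hform : ∀ {m : ℕ} (G : Matrix (Fin m) (Fin d) ℝ) (R : Matrix (Fin m) (Fin m) ℝ),
      y ⬝ᵥ ((Gᵀ * R * G) *ᵥ y) = (G *ᵥ y) ⬝ᵥ (R *ᵥ (G *ᵥ y)) := by
    intro m G R
    rw [← Matrix.mulVec_mulVec, ← Matrix.mulVec_mulVec, Matrix.dotProduct_mulVec y,
      Matrix.vecMul_transpose]
  rw [LQ.Adv, hcl, Matrix.sub_mulVec, Matrix.add_mulVec, dotProduct_sub, dotProduct_add,
    hform, hform]
  simp only [LQ.V, Matrix.mulVec_neg, neg_dotProduct, dotProduct_neg, neg_neg]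
  ring


open LQ in
/-- Cost difference lemma: for stabilizing `(K,L)` and `(K',L')`, with trajectory
`x'_t = (A-BK'-CL')ᵗ x`, `u'_t = -K' x'_t`, `v'_t = -L' x'_t`, the series
`Σ_t A_{K,L}(x'_t, u'_t, v'_t)` converges absolutely with sum `V_{K',L'}(x) - V_{K,L}(x)`. -/
theorem cost_difference_lemma {d m₁ m₂ : ℕ} (S : LQ d m₁ m₂)
    (K K' : Matrix (Fin m₁) (Fin d) ℝ) (L L' : Matrix (Fin m₂) (Fin d) ℝ)
    (hKL : S.IsStabilizing K L) (hKL' : S.IsStabilizing K' L') (x : Fin d → ℝ) :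
    Summable (fun t : ℕ =>
        |S.Adv K L ((S.cl K' L') ^ t *ᵥ x)
          (-(K' *ᵥ ((S.cl K' L') ^ t *ᵥ x))) (-(L' *ᵥ ((S.cl K' L') ^ t *ᵥ x)))|) ∧
    ∑' t : ℕ, S.Adv K L ((S.cl K' L') ^ t *ᵥ x)
        (-(K' *ᵥ ((S.cl K' L') ^ t *ᵥ x))) (-(L' *ᵥ ((S.cl K' L') ^ t *ᵥ x)))
      = S.V K' L' x - S.V K L x := by
  have hstage := hasSum_quadForm_pow (S.cl K' L')
    (S.Q + K'ᵀ * S.Ru * K' - L'ᵀ * S.Rv * L') hKL' x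
  have hV : Summable fun t : ℕ => S.V K L ((S.cl K' L') ^ t *ᵥ x) :=
    (hasSum_quadForm_pow (S.cl K' L') (S.P K L) hKL' x).summable
  have htel : HasSum (fun t : ℕ => S.V K L ((S.cl K' L') ^ (t + 1) *ᵥ x)
      - S.V K L ((S.cl K' L') ^ t *ᵥ x)) (-S.V K L x) := by
    have h1 := ((summable_nat_add_iff 1).2 hV).hasSum.sub hV.hasSum
    rw [hV.tsum_eq_zero_add] at h1
    simpa using h1
  have hadv : HasSum (fun t : ℕ => S.Adv K L ((S.cl K' L') ^ t *ᵥ x)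
      (-(K' *ᵥ ((S.cl K' L') ^ t *ᵥ x))) (-(L' *ᵥ ((S.cl K' L') ^ t *ᵥ x))))
      (S.V K' L' x - S.V K L x) := by
    rw [sub_eq_add_neg]
    have hsum : HasSum _ (S.V K' L' x + -S.V K L x) := hstage.add htel
    convert hsum using 1
    funext t
    rw [adv_feedback, pow_succ', ← Matrix.mulVec_mulVec x (S.cl K' L')]
  exact ⟨hadv.summable.abs, hadv.tsum_eq⟩
end
end

section
/- Let L ∈ ℝ^{m₂×d} and let P be a symmetric positive definite matrix satisfying the inner Riccati equation for L, with K_P(L) := (Rᵘ + BᵀPB)⁻¹BᵀPÃ_L, and suppose ρ(Ã_L − B·K_P(L)) < 1. Then: (i) P = P_{K_P(L),L}, i.e., P is the Lyapunov solution for the stabilizing pair (K_P(L), L); (ii) for every K̃ with (K̃,L) stabilizing and every x ∈ ℝ^d, xᵀPx ≤ V_{K̃,L}(x), and consequently C(K_P(L),L) ≤ C(K̃,L); (iii) Q − LᵀRᵛL ⪯ P. -/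
/-!
Fix `L` and a positive definite solution `P` of the inner Riccati equation, and write
`G = Rᵘ + BᵀPB`. Completing the square in the gain gives, for every `K` and with
`M = A - BK - CL`,
`Q + KᵀRᵘK - LᵀRᵛL = (P - MᵀPM) + (K - K_P(L))ᵀ G (K - K_P(L))`.

When `ρ(M) < 1`, Gelfand's formula makes `‖Mᵗ‖` decay geometrically, so `Σ (Mᵀ)ᵗ X Mᵗ` converges for
every `X`, and for `X = P - MᵀPM` it telescopes to `P`. Summing the identity therefore yields
`P_{K,L} - P = Σ (Mᵀ)ᵗ (K - K_P(L))ᵀ G (K - K_P(L)) Mᵗ`, which is positive semidefinite and vanishes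
at `K = K_P(L)`. The comparison of costs follows because the trace of a product of two positive
semidefinite matrices is nonnegative. The identity at `K = K_P(L)` also reads
`P - (Q - LᵀRᵛL) = KᵀRᵘK + MᵀPM`, a sum of positive semidefinite matrices.
-/

open Matrix

noncomputable section

section PowerDecay

attribute [local instance] Matrix.frobeniusNormedAddCommGroup Matrix.frobeniusNormedRing
  Matrix.frobeniusNormedAlgebra

open Filter Topology

/-- Gelfand's formula: powers of a matrix with spectral radius `< 1` decay geometrically. -/
lemma exists_norm_pow_le {n : ℕ} (M : Matrix (Fin n) (Fin n) ℝ) (h : specRad M < 1) :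
    ∃ r : NNReal, r < 1 ∧ ∀ᶠ t : ℕ in atTop, ‖M ^ t‖ ≤ (r : ℝ) ^ t := by
  have : CompleteSpace (Matrix (Fin n) (Fin n) ℂ) := FiniteDimensional.complete ℂ _
  obtain ⟨r, hr, hr1⟩ := ENNReal.lt_iff_exists_nnreal_btwn.1 h
  refine ⟨r, by exact_mod_cast hr1, ?_⟩
  have hG := spectrum.pow_nnnorm_pow_one_div_tendsto_nhds_spectralRadius
    (M.map (algebraMap ℝ ℂ))
  filter_upwards [hG.eventually_lt_const hr, eventually_gt_atTop 0] with t ht ht0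
  have ht0' : (0 : ℝ) < t := by exact_mod_cast ht0
  have h1 : ((‖(M.map (algebraMap ℝ ℂ)) ^ t‖₊ : ENNReal)) ≤ (r : ENNReal) ^ t := by
    rw [one_div] at ht
    have := (ENNReal.rpow_inv_le_iff ht0').1 ht.le
    simpa using this
  have h2 : ‖(M.map (algebraMap ℝ ℂ)) ^ t‖₊ = ‖M ^ t‖₊ := by
    rw [← Matrix.map_pow]
    exact Matrix.frobenius_nnnorm_map_eq _ _ (fun a => by simp)
  rw [h2] at h1
  exact_mod_cast h1

lemma summable_lyapunov {n : ℕ} (M X : Matrix (Fin n) (Fin n) ℝ) (h : specRad M < 1) :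
    Summable fun t : ℕ => Mᵀ ^ t * X * M ^ t := by
  obtain ⟨r, hr, hM⟩ := exists_norm_pow_le M h
  have : CompleteSpace (Matrix (Fin n) (Fin n) ℝ) := FiniteDimensional.complete ℝ _
  have hr' : (r : ℝ) < 1 := by exact_mod_cast hr
  have hs : Summable fun t : ℕ => ‖X‖ * ((r : ℝ) * r) ^ t :=
    (summable_geometric_of_lt_one (mul_nonneg r.2 r.2)
      (mul_lt_one_of_nonneg_of_lt_one_left r.2 hr' hr'.le)).mul_left _
  refine Summable.of_norm_bounded_eventually_nat hs ?_
  filter_upwards [hM] with t ht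
  calc ‖Mᵀ ^ t * X * M ^ t‖ ≤ ‖Mᵀ ^ t‖ * ‖X‖ * ‖M ^ t‖ :=
        (norm_mul_le _ _).trans (by gcongr; exact norm_mul_le _ _)
    _ = ‖M ^ t‖ * ‖X‖ * ‖M ^ t‖ := by
        rw [← Matrix.transpose_pow, Matrix.frobenius_norm_transpose]
    _ ≤ (r : ℝ) ^ t * ‖X‖ * (r : ℝ) ^ t := by gcongr
    _ = ‖X‖ * ((r : ℝ) * r) ^ t := by rw [mul_pow]; ring

end PowerDecay

/-- Uniqueness for the discrete Lyapunov equation, as a telescoping series: for `ρ(M) < 1` every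
`P` is recovered from `P - MᵀPM`. -/
lemma hasSum_lyapunov {n : ℕ} (M P : Matrix (Fin n) (Fin n) ℝ) (h : specRad M < 1) :
    HasSum (fun t : ℕ => Mᵀ ^ t * (P - Mᵀ * P * M) * M ^ t) P := by
  have hs := summable_lyapunov M (P - Mᵀ * P * M) h
  have h0 := (summable_lyapunov M P h).tendsto_atTop_zero
  have hsum : ∀ N : ℕ, ∑ t ∈ Finset.range N, Mᵀ ^ t * (P - Mᵀ * P * M) * M ^ t
      = P - Mᵀ ^ N * P * M ^ N := by
    intro N
    induction N with
    | zero => simp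
    | succ N ih =>
      rw [Finset.sum_range_succ, ih, pow_succ, pow_succ' M]
      noncomm_ring
  have h1 := hs.hasSum.tendsto_sum_nat
  simp_rw [hsum] at h1
  have h2 : Filter.Tendsto (fun N : ℕ => P - Mᵀ ^ N * P * M ^ N) Filter.atTop (nhds P) := by
    simpa using tendsto_const_nhds.sub h0
  have h3 := hs.hasSum
  rwa [tendsto_nhds_unique h1 h2] at h3

lemma posSemidef_of_hasSum {n : ℕ} {f : ℕ → Matrix (Fin n) (Fin n) ℝ}
    {X : Matrix (Fin n) (Fin n) ℝ} (hf : HasSum f X) (hp : ∀ t, (f t).PosSemidef) :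
    X.PosSemidef := by
  refine .of_dotProduct_mulVec_nonneg ?_ fun x => ?_
  · have h1 := hf.matrix_conjTranspose
    simp_rw [(hp _).isHermitian.eq] at h1
    exact h1.unique hf
  · have hc : Continuous fun Y : Matrix (Fin n) (Fin n) ℝ => star x ⬝ᵥ (Y *ᵥ x) := by
      fun_prop
    let φ : Matrix (Fin n) (Fin n) ℝ →+ ℝ :=
      { toFun := fun Y => star x ⬝ᵥ (Y *ᵥ x)
        map_zero' := by simp
        map_add' := fun Y Z => by simp [Matrix.add_mulVec] }
    exact (hf.map φ hc).nonneg fun t => (hp t).dotProduct_mulVec_nonneg x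

open scoped MatrixOrder in
lemma trace_mul_nonneg_of_posSemidef {n : ℕ} {X Y : Matrix (Fin n) (Fin n) ℝ}
    (hX : X.PosSemidef) (hY : Y.PosSemidef) : 0 ≤ (X * Y).trace := by
  obtain ⟨Z, rfl⟩ := CStarAlgebra.nonneg_iff_eq_star_mul_self.1 hX.nonneg
  rw [mul_assoc, Matrix.trace_mul_comm]
  exact (hY.mul_mul_conjTranspose_same Z).trace_nonneg

namespace LQ

variable {d m₁ m₂ : ℕ} (S : LQ d m₁ m₂)

lemma posDef_gram {P : Matrix (Fin d) (Fin d) ℝ} (hP : P.PosDef) :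
    (S.Ru + (S.B)ᵀ * P * S.B).PosDef :=
  S.hRu.add_posSemidef (by simpa using hP.posSemidef.conjTranspose_mul_mul_same S.B)

/-- Completion of squares: against a solution `P` of the inner Riccati equation, the gain `K` pays
an excess stage cost that is quadratic in `K - K_P(L)` with the positive definite weight
`Rᵘ + BᵀPB`. -/
lemma completion_of_squares {L : Matrix (Fin m₂) (Fin d) ℝ} {P : Matrix (Fin d) (Fin d) ℝ}
    (hP : P.PosDef) (hric : S.Riccati L P) (K : Matrix (Fin m₁) (Fin d) ℝ) :
    S.Q + Kᵀ * S.Ru * K - Lᵀ * S.Rv * L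
      = (P - (S.cl K L)ᵀ * P * S.cl K L)
        + (K - S.KP L P)ᵀ * (S.Ru + (S.B)ᵀ * P * S.B) * (K - S.KP L P) := by
  have hG := S.posDef_gram hP
  have hGK : (S.Ru + (S.B)ᵀ * P * S.B) * S.KP L P = (S.B)ᵀ * P * S.At L := by
    unfold KP
    rw [← Matrix.mul_assoc, ← Matrix.mul_assoc, ← Matrix.mul_assoc, Matrix.mul_nonsing_inv _
      ((Matrix.isUnit_iff_isUnit_det _).1 hG.isUnit), Matrix.one_mul]
  have hPt : Pᵀ = P := by simpa using hP.isHermitian.eq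
  have hGt : (S.Ru + (S.B)ᵀ * P * S.B)ᵀ = S.Ru + (S.B)ᵀ * P * S.B := by
    simpa using hG.isHermitian.eq
  have hKG : (S.KP L P)ᵀ * (S.Ru + (S.B)ᵀ * P * S.B) = (S.At L)ᵀ * P * S.B := by
    have := congrArg Matrix.transpose hGK
    rw [Matrix.transpose_mul, hGt] at this
    rw [this]
    simp [Matrix.transpose_mul, hPt, Matrix.mul_assoc]
  have hric' : P = (S.Q - Lᵀ * S.Rv * L) + (S.At L)ᵀ * P * S.At L
      - (S.At L)ᵀ * P * S.B * S.KP L P := by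
    have := hric
    unfold Riccati at this
    simpa only [KP, Matrix.mul_assoc] using this
  have hcl : S.cl K L = S.At L - S.B * K := by
    simp only [cl, At]; abel
  have hsq : (K - S.KP L P)ᵀ * (S.Ru + (S.B)ᵀ * P * S.B) * (K - S.KP L P)
      = Kᵀ * (S.Ru + (S.B)ᵀ * P * S.B) * K - (S.At L)ᵀ * P * S.B * K
        - Kᵀ * ((S.B)ᵀ * P * S.At L) + (S.At L)ᵀ * P * S.B * S.KP L P := by
    rw [Matrix.transpose_sub, Matrix.sub_mul, hKG, Matrix.sub_mul, Matrix.mul_sub, Matrix.mul_sub,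
      Matrix.mul_assoc Kᵀ _ (S.KP L P), hGK]
    abel
  have hQ : S.Q - Lᵀ * S.Rv * L
      = P - (S.At L)ᵀ * P * S.At L + (S.At L)ᵀ * P * S.B * S.KP L P := by
    rw [← add_sub_right_comm]
    exact eq_sub_of_add_eq (eq_sub_iff_add_eq.1 hric').symm
  rw [hsq, hcl, add_sub_right_comm, hQ]
  simp only [Matrix.transpose_sub, Matrix.transpose_mul, Matrix.sub_mul, Matrix.mul_sub,
    Matrix.mul_add, Matrix.add_mul, Matrix.mul_assoc]
  abel

/-- The excess `P_{K,L} - P` of a stabilizing gain `K` is the Lyapunov series of its completed square. -/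
lemma posSemidef_P_sub {L : Matrix (Fin m₂) (Fin d) ℝ} {P : Matrix (Fin d) (Fin d) ℝ}
    (hP : P.PosDef) (hric : S.Riccati L P) {K : Matrix (Fin m₁) (Fin d) ℝ}
    (hK : S.IsStabilizing K L) : (S.P K L - P).PosSemidef := by
  have h1 := (summable_lyapunov (S.cl K L) (S.Q + Kᵀ * S.Ru * K - Lᵀ * S.Rv * L) hK).hasSum
  have h2 := h1.sub (hasSum_lyapunov (S.cl K L) P hK)
  refine posSemidef_of_hasSum h2 fun t => ?_
  rw [← Matrix.sub_mul, ← Matrix.mul_sub, S.completion_of_squares hP hric K, add_sub_cancel_left,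
    ← Matrix.transpose_pow]
  have h3 := (S.posDef_gram hP).posSemidef.conjTranspose_mul_mul_same (K - S.KP L P)
  simpa only [Matrix.conjTranspose_eq_transpose_of_trivial]
    using h3.conjTranspose_mul_mul_same (S.cl K L ^ t)

lemma eq_P_KP {L : Matrix (Fin m₂) (Fin d) ℝ} {P : Matrix (Fin d) (Fin d) ℝ}
    (hP : P.PosDef) (hric : S.Riccati L P) (hstab : S.IsStabilizing (S.KP L P) L) :
    P = S.P (S.KP L P) L := by
  unfold LQ.P
  rw [S.completion_of_squares hP hric]
  simpa using (hasSum_lyapunov (S.cl (S.KP L P) L) P hstab).tsum_eq.symm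

end LQ

open LQ in
/-- Optimality of `K_P(L)`: if a symmetric positive definite `P` solves the inner Riccati
equation for `L` and `ρ(Ã_L - B K_P(L)) < 1`, then (i) `P` is the Lyapunov solution
`P_{K_P(L),L}`; (ii) `xᵀPx ≤ V_{K̃,L}(x)` for every stabilizing `(K̃,L)` and every `x`, hence
`C(K_P(L),L) ≤ C(K̃,L)`; (iii) `Q - LᵀRᵛL ⪯ P`. -/
theorem inner_opt_KP {d m₁ m₂ : ℕ} (S : LQ d m₁ m₂)
    (Sig0 : Matrix (Fin d) (Fin d) ℝ) (hSig0 : Sig0.PosDef)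
    (L : Matrix (Fin m₂) (Fin d) ℝ) (P : Matrix (Fin d) (Fin d) ℝ)
    (hP : P.PosDef) (hric : S.Riccati L P) (hstab : S.IsStabilizing (S.KP L P) L) :
    P = S.P (S.KP L P) L ∧
    (∀ Kt : Matrix (Fin m₁) (Fin d) ℝ, S.IsStabilizing Kt L →
        (∀ x : Fin d → ℝ, x ⬝ᵥ (P *ᵥ x) ≤ S.V Kt L x) ∧
        S.cost Sig0 (S.KP L P) L ≤ S.cost Sig0 Kt L) ∧
    (P - (S.Q - Lᵀ * S.Rv * L)).PosSemidef := by
  have hPe := S.eq_P_KP hP hric hstab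
  refine ⟨hPe, fun Kt hKt => ?_, ?_⟩
  · have hpsd := S.posSemidef_P_sub hP hric hKt
    refine ⟨fun x => ?_, ?_⟩
    · have := hpsd.dotProduct_mulVec_nonneg x
      rw [Matrix.sub_mulVec, dotProduct_sub] at this
      simpa [LQ.V] using this
    · have := trace_mul_nonneg_of_posSemidef hSig0.posSemidef hpsd
      rw [Matrix.mul_sub, Matrix.trace_sub, sub_nonneg] at this
      unfold LQ.cost
      rwa [← hPe]
  · have h := S.completion_of_squares hP hric (S.KP L P)
    have heq : P - (S.Q - Lᵀ * S.Rv * L) = (S.KP L P)ᵀ * S.Ru * S.KP L P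
        + (S.cl (S.KP L P) L)ᵀ * P * S.cl (S.KP L P) L := by
      rw [sub_self, Matrix.mul_zero, add_zero, add_sub_right_comm, ← eq_sub_iff_add_eq] at h
      rw [h]
      abel
    rw [heq]
    refine .add ?_ ?_
    · simpa using S.hRu.posSemidef.conjTranspose_mul_mul_same (S.KP L P)
    · simpa using hP.posSemidef.conjTranspose_mul_mul_same (S.cl (S.KP L P) L)
end
end

section
/- The maps (K,L) ↦ Σ_{K,L} and (K,L) ↦ P_{K,L} are continuous on the open set S := {(K,L) ∈ ℝ^{m₁×d} × ℝ^{m₂×d} : ρ(A−BK−CL) < 1}. -/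
/-!
Both series have the form `∑ₜ Mᵗ W (Mᵀ)ᵗ` or `∑ₜ (Mᵀ)ᵗ W Mᵗ`, with `M` and `W` polynomial in `(K, L)`,
so continuity follows from the Weierstrass M-test once `‖Mᵗ‖` is bounded geometrically and uniformly
for `M` near a fixed matrix `M₀` of spectral radius below `1`.

If `ρ(M₀) < r < 1`, Gelfand's formula (`exists_norm_pow_lt`) gives one exponent `N ≥ 1` with
`‖M₀ ^ N‖ < r ^ N`. This is a strict inequality between continuous functions of the matrix, so it
persists on a neighbourhood of `M₀`; splitting `t = N k + j` with `j < N` then yields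
`‖M ^ t‖ ≤ D r ^ t` there, with `D` independent of `M` (`eventually_forall_norm_pow_le`). The Frobenius
norm is convenient: it is submultiplicative, invariant under transposition, and unchanged by the
embedding of real matrices into complex ones.
-/


open Matrix

noncomputable section

section UniformDecay

open Filter Topology
open scoped Matrix.Norms.Frobenius

/-- Gelfand's formula for real matrices: a suitable power of a matrix with spectral radius below `1`
is as small as the same power of some `r < 1`. -/
theorem exists_norm_pow_lt {d : ℕ} (M : Matrix (Fin d) (Fin d) ℝ) (hM : specRad M < 1) :
    ∃ r : ℝ, 0 < r ∧ r < 1 ∧ ∃ N : ℕ, 0 < N ∧ ‖M ^ N‖ < r ^ N := by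
  obtain ⟨q, hq, hq1⟩ := exists_between hM
  have hqtop : q ≠ ⊤ := (hq1.trans ENNReal.one_lt_top).ne
  lift q to NNReal using hqtop
  have hq0 : 0 < q := by exact_mod_cast (zero_le.trans_lt hq : (0 : ENNReal) < q)
  refine ⟨q, hq0, by exact_mod_cast hq1, ?_⟩
  have hlim := spectrum.pow_nnnorm_pow_one_div_tendsto_nhds_spectralRadius
    (M.map (algebraMap ℝ ℂ))
  obtain ⟨N, hN, hN0⟩ := ((hlim.eventually_lt_const hq).and (eventually_gt_atTop 0)).exists
  refine ⟨N, hN0, ?_⟩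
  have hNpos : (0 : ℝ) < N := by exact_mod_cast hN0
  have hpow : (M.map (algebraMap ℝ ℂ)) ^ N = (M ^ N).map (algebraMap ℝ ℂ) :=
    (map_pow (algebraMap ℝ ℂ).mapMatrix M N).symm
  rw [hpow, Matrix.frobenius_nnnorm_map_eq _ _ (fun a => by simp), one_div,
    ENNReal.rpow_inv_lt_iff hNpos, ENNReal.rpow_natCast] at hN
  exact_mod_cast hN

/-- Near a matrix of spectral radius below `1`, powers decay geometrically with constants that do not
depend on the matrix. -/
theorem eventually_forall_norm_pow_le {d : ℕ} (M₀ : Matrix (Fin d) (Fin d) ℝ) (hM : specRad M₀ < 1) :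
    ∃ r D : ℝ, 0 < r ∧ r < 1 ∧ ∀ᶠ M in 𝓝 M₀, ∀ t : ℕ, ‖M ^ t‖ ≤ D * r ^ t := by
  obtain ⟨r, hr0, hr1, N, hN, hlt⟩ := exists_norm_pow_lt M₀ hM
  have hcont : ∀ j : ℕ, Continuous fun M : Matrix (Fin d) (Fin d) ℝ => ‖M ^ j‖ :=
    fun j => (continuous_pow j).norm
  -- Near `M₀` the constant dominates `‖M ^ j‖ / r ^ j` for every remainder `j < N`.
  refine ⟨r, ∑ j ∈ Finset.range N, (‖M₀ ^ j‖ + 1) / r ^ j, hr0, hr1, ?_⟩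
  have h1 : ∀ᶠ M in 𝓝 M₀, ‖M ^ N‖ < r ^ N :=
    (hcont N).continuousAt.eventually_lt_const hlt
  have h2 : ∀ᶠ M in 𝓝 M₀, ∀ j ∈ Finset.range N, ‖M ^ j‖ < ‖M₀ ^ j‖ + 1 :=
    (Finset.range N).eventually_all.2 fun j _ =>
      (hcont j).continuousAt.eventually_lt_const (lt_add_one _)
  filter_upwards [h1, h2] with M hMN hMj t
  set D := ∑ j ∈ Finset.range N, (‖M₀ ^ j‖ + 1) / r ^ j with hD
  have hbase : ∀ j < N, ‖M ^ j‖ ≤ D * r ^ j := by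
    intro j hj
    have hle : (‖M₀ ^ j‖ + 1) / r ^ j ≤ D :=
      Finset.single_le_sum (f := fun j => (‖M₀ ^ j‖ + 1) / r ^ j)
        (fun i _ => by positivity) (Finset.mem_range.2 hj)
    rw [div_le_iff₀ (pow_pos hr0 j)] at hle
    exact (hMj j (Finset.mem_range.2 hj)).le.trans hle
  induction t using Nat.strong_induction_on with
  | _ t ih =>
    rcases lt_or_ge t N with ht | ht
    · exact hbase t ht
    · obtain ⟨k, rfl⟩ := Nat.exists_eq_add_of_le ht
      calc ‖M ^ (N + k)‖ ≤ ‖M ^ N‖ * ‖M ^ k‖ := by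
            rw [pow_add]; exact norm_mul_le _ _
        _ ≤ r ^ N * (D * r ^ k) :=
            mul_le_mul hMN.le (ih k (by omega)) (norm_nonneg _) (by positivity)
        _ = D * r ^ (N + k) := by ring

/-- The M-test for two-sided power series in matrices `f x`, `g x` whose powers are as large as those
of a matrix `M x` with spectral radius below `1` at `x₀`. Taking `f` and `g` to be `M` and `Mᵀ`, in
either order, covers both Lyapunov series with a decay estimate for `M` alone. -/
theorem continuousAt_tsum_pow_mul_mul_pow {X : Type*} [TopologicalSpace X] {d : ℕ}
    {M f g W : X → Matrix (Fin d) (Fin d) ℝ} (hM : Continuous M) (hf : Continuous f)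
    (hg : Continuous g) (hW : Continuous W) (hfM : ∀ x t, ‖f x ^ t‖ = ‖M x ^ t‖)
    (hgM : ∀ x t, ‖g x ^ t‖ = ‖M x ^ t‖) (x₀ : X) (hx : specRad (M x₀) < 1) :
    ContinuousAt (fun x => ∑' t : ℕ, f x ^ t * W x * g x ^ t) x₀ := by
  obtain ⟨r, D, hr0, hr1, hev⟩ := eventually_forall_norm_pow_le (M x₀) hx
  have h1 := hM.continuousAt.eventually hev
  have h2 : ∀ᶠ x in 𝓝 x₀, ‖W x‖ < ‖W x₀‖ + 1 :=
    hW.norm.continuousAt.eventually_lt_const (lt_add_one _)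
  refine ContinuousOn.continuousAt (continuousOn_tsum
    (u := fun t => D ^ 2 * (‖W x₀‖ + 1) * (r ^ 2) ^ t) ?_ ?_ ?_) (h1.and h2)
  · intro t
    exact (((hf.pow t).mul hW).mul (hg.pow t)).continuousOn
  · exact (summable_geometric_of_lt_one (by positivity) (by nlinarith)).mul_left _
  · rintro t x ⟨hx1, hx2⟩
    have hDr : 0 ≤ D * r ^ t := (norm_nonneg _).trans (hx1 t)
    calc ‖f x ^ t * W x * g x ^ t‖ ≤ ‖f x ^ t‖ * ‖W x‖ * ‖g x ^ t‖ :=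
          (norm_mul_le _ _).trans (by gcongr; exact norm_mul_le _ _)
      _ = ‖M x ^ t‖ * ‖W x‖ * ‖M x ^ t‖ := by rw [hfM, hgM]
      _ ≤ (D * r ^ t) * (‖W x₀‖ + 1) * (D * r ^ t) := by
          gcongr
          exacts [hx1 t, hx1 t]
      _ = D ^ 2 * (‖W x₀‖ + 1) * (r ^ 2) ^ t := by ring

theorem continuousAt_lyapunov_tsum {X : Type*} [TopologicalSpace X] {d : ℕ}
    {M W : X → Matrix (Fin d) (Fin d) ℝ} (hM : Continuous M) (hW : Continuous W) (x₀ : X)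
    (hx : specRad (M x₀) < 1) :
    ContinuousAt (fun x => ∑' t : ℕ, M x ^ t * W x * (M x)ᵀ ^ t) x₀ ∧
      ContinuousAt (fun x => ∑' t : ℕ, (M x)ᵀ ^ t * W x * M x ^ t) x₀ := by
  have hT : ∀ x t, ‖(M x)ᵀ ^ t‖ = ‖M x ^ t‖ := fun x t => by
    rw [← Matrix.transpose_pow, Matrix.frobenius_norm_transpose]
  exact ⟨continuousAt_tsum_pow_mul_mul_pow hM hM hM.matrix_transpose hW (fun _ _ => rfl) hT x₀ hx,
    continuousAt_tsum_pow_mul_mul_pow hM hM.matrix_transpose hM hW hT (fun _ _ => rfl) x₀ hx⟩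

end UniformDecay

open LQ in
/-- Continuity of `(K,L) ↦ Σ_{K,L}` and `(K,L) ↦ P_{K,L}` on the open set of stabilizing
pairs. -/
theorem Sigma_P_continuousOn {d m₁ m₂ : ℕ} (S : LQ d m₁ m₂)
    (Sig0 : Matrix (Fin d) (Fin d) ℝ) (hSig0 : Sig0.PosDef) :
    ContinuousOn
      (fun p : Matrix (Fin m₁) (Fin d) ℝ × Matrix (Fin m₂) (Fin d) ℝ => S.Sig Sig0 p.1 p.2)
      {p : Matrix (Fin m₁) (Fin d) ℝ × Matrix (Fin m₂) (Fin d) ℝ | S.IsStabilizing p.1 p.2} ∧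
    ContinuousOn
      (fun p : Matrix (Fin m₁) (Fin d) ℝ × Matrix (Fin m₂) (Fin d) ℝ => S.P p.1 p.2)
      {p : Matrix (Fin m₁) (Fin d) ℝ × Matrix (Fin m₂) (Fin d) ℝ | S.IsStabilizing p.1 p.2} := by
  have hcl : Continuous fun p : Matrix (Fin m₁) (Fin d) ℝ × Matrix (Fin m₂) (Fin d) ℝ =>
      S.cl p.1 p.2 := by
    unfold LQ.cl; fun_prop
  have hW : Continuous fun p : Matrix (Fin m₁) (Fin d) ℝ × Matrix (Fin m₂) (Fin d) ℝ =>
      S.Q + p.1ᵀ * S.Ru * p.1 - p.2ᵀ * S.Rv * p.2 := by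
    fun_prop
  refine ⟨fun p hp => ?_, fun p hp => ?_⟩
  · exact (continuousAt_lyapunov_tsum hcl continuous_const p hp).1.continuousWithinAt
  · exact (continuousAt_lyapunov_tsum hcl hW p hp).2.continuousWithinAt
end
end

section
/- Let L₀ ∈ ℝ^{m₂×d} and let P₀ be a symmetric positive definite matrix satisfying the inner Riccati equation for L₀ such that ρ(Ã_{L₀} − B·K_{P₀}(L₀)) < 1, where K_{P₀}(L₀) := (Rᵘ + BᵀP₀B)⁻¹BᵀP₀Ã_{L₀}. Then there exist an open neighborhood U of L₀ in ℝ^{m₂×d} and a continuously differentiable map g : U → ℝ^{d×d} taking symmetric values, with g(L₀) = P₀, such that for every L ∈ U the matrix g(L) satisfies the inner Riccati equation for L. -/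
/-!
The solution map is obtained from the implicit function theorem applied to the residual
`F(L, P)` of the inner Riccati equation on the space of all (not necessarily symmetric) matrices.

The residual is a rational function of the entries, hence `C¹` near `(L₀, P₀)`, where
`G(P) = Rᵘ + BᵀPB` is positive definite. Its partial derivative in `P` is read off from the exact
identity `LQ.ricF_sub`, `F(L, P₁) - F(L, P₂) = N(P₁)(P₁ - P₂)M(P₂) - (P₁ - P₂)`, in which
`M(P) = Ã_L - B K_P(L)` and `N(P) = M(P)ᵀ` for symmetric `P`: at `P₀` it is the Stein operator
`H ↦ MᵀHM - H` (`LQ.fderiv_ricF_inr`). This operator is injective because `ρ(M) < 1` forces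
`Mᵏ → 0` (`stein_injective`), and therefore invertible in finite dimension.

Symmetry of the values comes from uniqueness: `F(L, Pᵀ) = F(L, P)ᵀ`, so `g(L)ᵀ` is a solution
close to `P₀` and must equal `g(L)`.
-/

open Matrix

noncomputable section

attribute [local instance] Matrix.normedAddCommGroup Matrix.normedSpace

open Filter Topology

/-- By Gelfand's formula, `ρ(a) < 1` gives `‖aᵏ‖ ≤ rᵏ` eventually, for some `r < 1`. -/
lemma tendsto_pow_of_spectralRadius_lt_one {R : Type*} [NormedRing R] [NormedAlgebra ℂ R]
    [FiniteDimensional ℂ R] (a : R) (h : spectralRadius ℂ a < 1) :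
    Tendsto (fun k : ℕ => a ^ k) atTop (𝓝 0) := by
  have : CompleteSpace R := FiniteDimensional.complete ℂ R
  have hg := spectrum.pow_nnnorm_pow_one_div_tendsto_nhds_spectralRadius a
  obtain ⟨r, hr, hr1⟩ := ENNReal.lt_iff_exists_nnreal_btwn.1 h
  have hr1' : r < 1 := by exact_mod_cast hr1
  have hev : ∀ᶠ k : ℕ in atTop, ‖a ^ k‖ ≤ (r : ℝ) ^ k := by
    filter_upwards [hg.eventually (gt_mem_nhds hr), eventually_gt_atTop 0] with k hk hk0
    have hk0' : (k : ℝ) ≠ 0 := by positivity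
    have h2 := ENNReal.rpow_le_rpow hk.le (Nat.cast_nonneg (α := ℝ) k)
    rw [← ENNReal.rpow_mul, one_div, inv_mul_cancel₀ hk0', ENNReal.rpow_one,
      ENNReal.rpow_natCast] at h2
    exact_mod_cast h2
  exact squeeze_zero_norm' hev (tendsto_pow_atTop_nhds_zero_of_lt_one r.2 hr1')

lemma tendsto_pow_entry {n : ℕ} (M : Matrix (Fin n) (Fin n) ℝ) (h : specRad M < 1)
    (i j : Fin n) : Tendsto (fun k : ℕ => (M ^ k) i j) atTop (𝓝 0) := by
  set a : Matrix (Fin n) (Fin n) ℂ := M.map (algebraMap ℝ ℂ) with ha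
  -- The entrywise sup norm is not submultiplicative; the `ℓ∞` operator norm induces the same
  -- topology and makes matrices a Banach algebra.
  have hz : Tendsto (fun k : ℕ => a ^ k) atTop (𝓝 0) :=
    @tendsto_pow_of_spectralRadius_lt_one _ Matrix.linftyOpNormedRing Matrix.linftyOpNormedAlgebra
      (inferInstanceAs (FiniteDimensional ℂ (Matrix (Fin n) (Fin n) ℂ))) a h
  have hent : ∀ k, (a ^ k) i j = ((M ^ k) i j : ℂ) := by
    intro k
    have : a ^ k = (M ^ k).map (algebraMap ℝ ℂ) := (Matrix.map_pow M (algebraMap ℝ ℂ) k).symm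
    rw [this]; rfl
  have hzij : Tendsto (fun k : ℕ => (a ^ k) i j) atTop (𝓝 0) :=
    tendsto_pi_nhds.1 (tendsto_pi_nhds.1 hz i) j
  simp only [hent] at hzij
  have := (Complex.continuous_re.tendsto 0).comp hzij
  simpa [Function.comp_def] using this

/-- The Stein operator `H ↦ MᵀHM - H` has trivial kernel when `ρ(M) < 1`: a fixed point satisfies
`H = (Mᵏ)ᵀ H Mᵏ` for all `k`, and the right side tends to zero. -/
lemma stein_injective {n : ℕ} (M H : Matrix (Fin n) (Fin n) ℝ) (h : specRad M < 1)
    (hH : Mᵀ * H * M = H) : H = 0 := by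
  have hp : ∀ k : ℕ, (M ^ k)ᵀ * H * M ^ k = H := by
    intro k
    induction k with
    | zero => simp
    | succ k ih =>
      calc (M ^ (k + 1))ᵀ * H * M ^ (k + 1) = Mᵀ * ((M ^ k)ᵀ * H * M ^ k) * M := by
            rw [pow_succ, Matrix.transpose_mul]; simp only [Matrix.mul_assoc]
        _ = H := by rw [ih, hH]
  have ht : Tendsto (fun k : ℕ => M ^ k) atTop (𝓝 0) :=
    tendsto_pi_nhds.2 fun i => tendsto_pi_nhds.2 fun j => tendsto_pow_entry M h i j
  have hc : Continuous fun X : Matrix (Fin n) (Fin n) ℝ => Xᵀ * H * X := by fun_prop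
  have h2 := (hc.tendsto 0).comp ht
  simp only [Function.comp_def, hp, Matrix.mul_zero] at h2
  exact tendsto_nhds_unique tendsto_const_nhds h2


lemma posDef_transpose {n : ℕ} {P : Matrix (Fin n) (Fin n) ℝ} (h : P.PosDef) : Pᵀ = P := by
  have : P.IsSymm := by simpa using h.isHermitian
  exact this

section Smooth

variable {E : Type*} [NormedAddCommGroup E] [NormedSpace ℝ E] {k l m : ℕ} {x : E}

lemma contDiffAt_matrix {f : E → Matrix (Fin k) (Fin l) ℝ} :
    ContDiffAt ℝ 1 f x ↔ ∀ i j, ContDiffAt ℝ 1 (fun y => f y i j) x := by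
  refine (contDiffAt_pi (𝕜 := ℝ) (Φ := f)).trans (forall_congr' fun i => ?_)
  exact contDiffAt_pi (𝕜 := ℝ) (Φ := fun y => f y i)

lemma contDiffAt_matrix_mul {f : E → Matrix (Fin k) (Fin l) ℝ} {g : E → Matrix (Fin l) (Fin m) ℝ}
    (hf : ContDiffAt ℝ 1 f x) (hg : ContDiffAt ℝ 1 g x) :
    ContDiffAt ℝ 1 (fun y => f y * g y) x := by
  rw [contDiffAt_matrix] at *
  intro i j
  simp only [Matrix.mul_apply]
  exact ContDiffAt.sum fun a _ => (hf i a).mul (hg a j)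

lemma contDiffAt_matrix_transpose {f : E → Matrix (Fin k) (Fin l) ℝ}
    (hf : ContDiffAt ℝ 1 f x) : ContDiffAt ℝ 1 (fun y => (f y)ᵀ) x := by
  rw [contDiffAt_matrix] at *
  exact fun i j => hf j i

lemma contDiffAt_matrix_det {f : E → Matrix (Fin k) (Fin k) ℝ}
    (hf : ContDiffAt ℝ 1 f x) : ContDiffAt ℝ 1 (fun y => (f y).det) x := by
  rw [contDiffAt_matrix] at hf
  simp only [Matrix.det_apply]
  exact ContDiffAt.sum fun σ _ => (contDiffAt_prod fun i _ => hf _ _).const_smul _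

/-- Matrix inversion is `C¹` at an invertible matrix, by Cramer's rule. -/
lemma contDiffAt_matrix_inv {f : E → Matrix (Fin k) (Fin k) ℝ}
    (hf : ContDiffAt ℝ 1 f x) (h0 : (f x).det ≠ 0) : ContDiffAt ℝ 1 (fun y => (f y)⁻¹) x := by
  rw [contDiffAt_matrix]
  intro i j
  simp only [Matrix.inv_def, Matrix.smul_apply, smul_eq_mul, Ring.inverse_eq_inv',
    Matrix.adjugate_apply]
  refine ((contDiffAt_matrix_det hf).inv h0).mul (contDiffAt_matrix_det ?_)
  rw [contDiffAt_matrix] at *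
  intro a b
  by_cases hab : a = j
  · subst hab
    simpa using contDiffAt_const
  · simpa [Matrix.updateRow_ne hab] using hf a b

end Smooth

namespace LQ

variable {d m₁ m₂ : ℕ} (S : LQ d m₁ m₂)

/-- The matrix `G(P) = Rᵘ + BᵀPB` inverted in the inner Riccati equation. -/
def ricG (P : Matrix (Fin d) (Fin d) ℝ) : Matrix (Fin m₁) (Fin m₁) ℝ :=
  S.Ru + (S.B)ᵀ * P * S.B

/-- The residual of the inner Riccati equation, as a function of the pair `(L, P)`. -/
def ricF (z : Matrix (Fin m₂) (Fin d) ℝ × Matrix (Fin d) (Fin d) ℝ) : Matrix (Fin d) (Fin d) ℝ :=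
  (S.Q - z.1ᵀ * S.Rv * z.1) + (S.At z.1)ᵀ * z.2 * S.At z.1
      - (S.At z.1)ᵀ * z.2 * S.B * (S.ricG z.2)⁻¹ * (S.B)ᵀ * z.2 * S.At z.1 - z.2

lemma ricF_eq_zero_iff (L : Matrix (Fin m₂) (Fin d) ℝ) (P : Matrix (Fin d) (Fin d) ℝ) :
    S.ricF (L, P) = 0 ↔ S.Riccati L P := by
  rw [ricF, sub_eq_zero, Riccati, eq_comm]; rfl

lemma ricF_transpose (L : Matrix (Fin m₂) (Fin d) ℝ) (P : Matrix (Fin d) (Fin d) ℝ) :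
    S.ricF (L, Pᵀ) = (S.ricF (L, P))ᵀ := by
  have hQ : S.Qᵀ = S.Q := posDef_transpose S.hQ
  have hu : S.Ruᵀ = S.Ru := posDef_transpose S.hRu
  have hv : S.Rvᵀ = S.Rv := posDef_transpose S.hRv
  have hG : S.ricG Pᵀ = (S.ricG P)ᵀ := by
    simp [ricG, hu, Matrix.mul_assoc]
  simp only [ricF, hG, Matrix.transpose_sub, Matrix.transpose_add, Matrix.transpose_mul,
    Matrix.transpose_transpose, Matrix.transpose_nonsing_inv, hQ, hv, Matrix.mul_assoc]

lemma ricG_det_ne_zero {P : Matrix (Fin d) (Fin d) ℝ} (hP : P.PosDef) :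
    (S.ricG P).det ≠ 0 := by
  have h := S.hRu.add_posSemidef (hP.posSemidef.conjTranspose_mul_mul_same S.B)
  exact (ne_of_lt h.det_pos).symm

/-- The left factor `Ãᵀ - ÃᵀPB G(P)⁻¹Bᵀ` in the difference identity `ricF_sub`. For symmetric `P`
it is the transposed closed-loop matrix. -/
def ricN (L : Matrix (Fin m₂) (Fin d) ℝ) (P : Matrix (Fin d) (Fin d) ℝ) :
    Matrix (Fin d) (Fin d) ℝ :=
  (S.At L)ᵀ - (S.At L)ᵀ * P * S.B * (S.ricG P)⁻¹ * (S.B)ᵀ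

/-- The exact difference identity for the residual. Expanding the right side, the terms that mix
both inverses combine through `G(P₁)⁻¹(G(P₁) - G(P₂))G(P₂)⁻¹ = G(P₂)⁻¹ - G(P₁)⁻¹`. -/
lemma ricF_sub (L : Matrix (Fin m₂) (Fin d) ℝ) (P₁ P₂ : Matrix (Fin d) (Fin d) ℝ)
    (h₁ : (S.ricG P₁).det ≠ 0) (h₂ : (S.ricG P₂).det ≠ 0) :
    S.ricF (L, P₁) - S.ricF (L, P₂) =
      S.ricN L P₁ * (P₁ - P₂) * (S.At L - S.B * S.KP L P₂) - (P₁ - P₂) := by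
  have e : (S.ricG P₁)⁻¹ * ((S.B)ᵀ * (P₁ - P₂) * S.B) * (S.ricG P₂)⁻¹
      = (S.ricG P₂)⁻¹ - (S.ricG P₁)⁻¹ := by
    have : (S.B)ᵀ * (P₁ - P₂) * S.B = S.ricG P₁ - S.ricG P₂ := by
      simp only [ricG, Matrix.mul_sub, Matrix.sub_mul]; abel
    rw [this, Matrix.mul_sub, Matrix.sub_mul, Matrix.nonsing_inv_mul _ h₁.isUnit, Matrix.mul_assoc,
      Matrix.mul_nonsing_inv _ h₂.isUnit, Matrix.one_mul, Matrix.mul_one]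
  have hK : S.KP L P₂ = (S.ricG P₂)⁻¹ * (S.B)ᵀ * P₂ * S.At L := rfl
  have e' : (S.At L)ᵀ * P₁ * S.B * ((S.ricG P₁)⁻¹ * ((S.B)ᵀ * (P₁ - P₂) * S.B) * (S.ricG P₂)⁻¹)
        * (S.B)ᵀ * P₂ * S.At L
      = (S.At L)ᵀ * P₁ * S.B * ((S.ricG P₂)⁻¹ - (S.ricG P₁)⁻¹) * (S.B)ᵀ * P₂ * S.At L := by
    rw [e]
  simp only [ricF, ricN, hK]
  simp only [Matrix.mul_sub, Matrix.sub_mul, Matrix.mul_assoc] at e' ⊢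
  have := sub_eq_zero.2 e'
  rw [← sub_eq_zero]
  rw [← neg_eq_zero, ← this]
  abel

lemma ricN_eq (L : Matrix (Fin m₂) (Fin d) ℝ) {P : Matrix (Fin d) (Fin d) ℝ} (hP : P.PosDef) :
    S.ricN L P = (S.At L - S.B * S.KP L P)ᵀ := by
  have hPt : Pᵀ = P := posDef_transpose hP
  have hu : S.Ruᵀ = S.Ru := posDef_transpose S.hRu
  have hG : (S.ricG P)ᵀ = S.ricG P := by
    simp [ricG, hu, hPt, Matrix.mul_assoc]
  have hK : S.KP L P = (S.ricG P)⁻¹ * (S.B)ᵀ * P * S.At L := rfl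
  simp only [ricN, hK, hG, hPt, Matrix.transpose_sub, Matrix.transpose_mul,
    Matrix.transpose_transpose, Matrix.transpose_nonsing_inv, Matrix.mul_assoc]

lemma contDiffAt_ricG {P : Matrix (Fin d) (Fin d) ℝ} : ContDiffAt ℝ 1 S.ricG P := by
  unfold ricG
  exact contDiffAt_const.add
    (contDiffAt_matrix_mul (contDiffAt_matrix_mul contDiffAt_const contDiffAt_id) contDiffAt_const)

lemma contDiffAt_ricF (L : Matrix (Fin m₂) (Fin d) ℝ) {P : Matrix (Fin d) (Fin d) ℝ}
    (h : (S.ricG P).det ≠ 0) : ContDiffAt ℝ 1 S.ricF (L, P) := by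
  have hL : ContDiffAt ℝ 1 (fun z : Matrix (Fin m₂) (Fin d) ℝ × Matrix (Fin d) (Fin d) ℝ => z.1)
      (L, P) := contDiffAt_fst
  have hP : ContDiffAt ℝ 1 (fun z : Matrix (Fin m₂) (Fin d) ℝ × Matrix (Fin d) (Fin d) ℝ => z.2)
      (L, P) := contDiffAt_snd
  have hA : ContDiffAt ℝ 1
      (fun z : Matrix (Fin m₂) (Fin d) ℝ × Matrix (Fin d) (Fin d) ℝ => S.At z.1) (L, P) :=
    contDiffAt_const.sub (contDiffAt_matrix_mul contDiffAt_const hL)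
  have hAt := contDiffAt_matrix_transpose hA
  have hG : ContDiffAt ℝ 1
      (fun z : Matrix (Fin m₂) (Fin d) ℝ × Matrix (Fin d) (Fin d) ℝ => S.ricG z.2) (L, P) :=
    S.contDiffAt_ricG.comp (L, P) hP
  have hGi := contDiffAt_matrix_inv hG h
  unfold ricF
  refine ((ContDiffAt.add (contDiffAt_const.sub ?_) ?_).sub ?_).sub hP
  · exact contDiffAt_matrix_mul (contDiffAt_matrix_mul (contDiffAt_matrix_transpose hL)
      contDiffAt_const) hL
  · exact contDiffAt_matrix_mul (contDiffAt_matrix_mul hAt hP) hA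
  · exact contDiffAt_matrix_mul (contDiffAt_matrix_mul (contDiffAt_matrix_mul
      (contDiffAt_matrix_mul (contDiffAt_matrix_mul (contDiffAt_matrix_mul hAt hP)
      contDiffAt_const) hGi) contDiffAt_const) hP) hA

lemma continuousAt_ricN (L : Matrix (Fin m₂) (Fin d) ℝ) {P : Matrix (Fin d) (Fin d) ℝ}
    (h : (S.ricG P).det ≠ 0) : ContinuousAt (S.ricN L) P := by
  unfold ricN
  have hGi := contDiffAt_matrix_inv S.contDiffAt_ricG h
  exact (contDiffAt_const.sub (contDiffAt_matrix_mul (contDiffAt_matrix_mul (contDiffAt_matrix_mul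
    (contDiffAt_matrix_mul contDiffAt_const contDiffAt_id) contDiffAt_const) hGi)
    contDiffAt_const)).continuousAt

/-- The partial derivative of the residual in `P` is the Stein operator of the closed-loop matrix
`M = Ã - BK`. -/
lemma fderiv_ricF_inr (L : Matrix (Fin m₂) (Fin d) ℝ) {P : Matrix (Fin d) (Fin d) ℝ}
    (hP : P.PosDef) (H : Matrix (Fin d) (Fin d) ℝ) :
    fderiv ℝ S.ricF (L, P) (0, H) =
      (S.At L - S.B * S.KP L P)ᵀ * H * (S.At L - S.B * S.KP L P) - H := by
  have h0 := S.ricG_det_ne_zero hP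
  set M := S.At L - S.B * S.KP L P with hM
  have hF := ((S.contDiffAt_ricF L h0).differentiableAt one_ne_zero).hasFDerivAt
  have hline : Tendsto (fun t : ℝ => P + t • H) (𝓝[≠] 0) (𝓝 P) := by
    have : Continuous fun t : ℝ => P + t • H := by fun_prop
    simpa using (this.tendsto 0).mono_left nhdsWithin_le_nhds
  have hd := hF.hasLineDerivAt (0, H)
  have hs := hasDerivAt_iff_tendsto_slope_zero.1 hd
  refine tendsto_nhds_unique hs ?_
  have hdet : ∀ᶠ t : ℝ in 𝓝[≠] 0, (S.ricG (P + t • H)).det ≠ 0 :=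
    hline.eventually
      ((contDiffAt_matrix_det S.contDiffAt_ricG).continuousAt.eventually_ne h0)
  have hN : Tendsto (fun t : ℝ => S.ricN L (P + t • H) * H * M - H) (𝓝[≠] 0)
      (𝓝 (Mᵀ * H * M - H)) := by
    have hc : Continuous fun X : Matrix (Fin d) (Fin d) ℝ => X * H * M - H := by fun_prop
    have h1 := (S.continuousAt_ricN L h0).tendsto.comp hline
    rw [S.ricN_eq L hP] at h1
    exact (hc.tendsto _).comp h1
  refine hN.congr' ?_
  filter_upwards [hdet, self_mem_nhdsWithin] with t ht ht0
  have ht0 : t ≠ 0 := ht0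
  have hsub := S.ricF_sub L (P + t • H) P ht h0
  simp only [zero_add, zero_smul, add_zero, Prod.smul_mk, smul_zero, Prod.mk_add_mk]
  rw [hsub, ← hM, add_sub_cancel_left, Matrix.mul_smul, Matrix.smul_mul, ← smul_sub,
    inv_smul_smul₀ ht0]

end LQ

open LQ in
/-- Implicit-function property of the inner Riccati equation: around a stabilizing solution
`(L₀, P₀)` there is an open neighborhood `U` of `L₀` and a `C¹` map `g` with symmetric values,
`g L₀ = P₀`, solving the inner Riccati equation for every `L ∈ U`. -/
theorem riccati_solution_local_C1 {d m₁ m₂ : ℕ} (S : LQ d m₁ m₂)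
    (L₀ : Matrix (Fin m₂) (Fin d) ℝ) (P₀ : Matrix (Fin d) (Fin d) ℝ)
    (hP₀ : P₀.PosDef) (hric : S.Riccati L₀ P₀)
    (hstab : specRad (S.At L₀ - S.B * S.KP L₀ P₀) < 1) :
    ∃ U : Set (Matrix (Fin m₂) (Fin d) ℝ), IsOpen U ∧ L₀ ∈ U ∧
      ∃ g : Matrix (Fin m₂) (Fin d) ℝ → Matrix (Fin d) (Fin d) ℝ,
        ContDiffOn ℝ 1 g U ∧ (∀ L ∈ U, (g L).IsHermitian) ∧ g L₀ = P₀ ∧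
        ∀ L ∈ U, S.Riccati L (g L) := by
  classical
  have h0 := S.ricG_det_ne_zero hP₀
  have cdf := S.contDiffAt_ricF L₀ h0
  have hF0 : S.ricF (L₀, P₀) = 0 := (S.ricF_eq_zero_iff L₀ P₀).2 hric
  set D := fderiv ℝ S.ricF (L₀, P₀) ∘L
    ContinuousLinearMap.inr ℝ (Matrix (Fin m₂) (Fin d) ℝ) (Matrix (Fin d) (Fin d) ℝ) with hD
  have hinj : Function.Injective D := by
    rw [injective_iff_map_eq_zero]
    intro H hH
    have hH' : fderiv ℝ S.ricF (L₀, P₀) (0, H) = 0 := hH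
    rw [S.fderiv_ricF_inr L₀ hP₀, sub_eq_zero] at hH'
    exact stein_injective _ H hstab hH'
  have if₂ : D.IsInvertible :=
    ⟨(LinearEquiv.ofInjectiveEndo D.toLinearMap hinj).toContinuousLinearEquiv, by ext1; rfl⟩
  set g := cdf.implicitFunction one_ne_zero if₂ with hg
  have hself : g L₀ = P₀ := cdf.implicitFunction_apply_self one_ne_zero if₂
  have hcd : ContDiffAt ℝ 1 g L₀ := cdf.contDiffAt_implicitFunction one_ne_zero if₂
  have hsol : ∀ᶠ L in 𝓝 L₀, S.ricF (L, g L) = 0 := by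
    filter_upwards [cdf.eventually_apply_implicitFunction one_ne_zero if₂] with L hL
    exact hL.trans hF0
  have huniq := cdf.eventually_apply_eq_iff_implicitFunction one_ne_zero if₂
  have hPt : P₀ᵀ = P₀ := posDef_transpose hP₀
  -- `(L, g(L)ᵀ)` stays close to `(L₀, P₀)`, so the local uniqueness of the solution applies to it.
  have hpair : Tendsto (fun L => (L, (g L)ᵀ)) (𝓝 L₀) (𝓝 (L₀, P₀)) := by
    have h1 := (contDiffAt_matrix_transpose hcd).continuousAt.tendsto
    rw [hself, hPt] at h1
    exact tendsto_id.prodMk_nhds h1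
  have hsymm : ∀ᶠ L in 𝓝 L₀, (g L)ᵀ = g L := by
    filter_upwards [hpair.eventually huniq, hsol] with L h1 h2
    refine (h1.1 ?_).symm
    rw [S.ricF_transpose, h2, hF0, Matrix.transpose_zero]
  have hcd' : ∀ᶠ L in 𝓝 L₀, ContDiffAt ℝ 1 g L := hcd.eventually (by simp)
  obtain ⟨U, hU, hUo, hLU⟩ := eventually_nhds_iff.1 (hcd'.and (hsymm.and hsol))
  refine ⟨U, hUo, hLU, g, fun L hL => (hU L hL).1.contDiffWithinAt, fun L hL => ?_, hself,
    fun L hL => (S.ricF_eq_zero_iff L (g L)).1 (hU L hL).2.2⟩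
  simpa [Matrix.IsHermitian] using (hU L hL).2.1
end
end
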